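/- arXiv:1009.1226 — 6 statements merged into one kernel-verified Lean document; each statement's English description precedes it below -/
import Mathlib

section
/- There exist division rings D₁ and D₂, each finite-dimensional as a vector space over its center, whose centers are fields of characteristic zero, such that there is no division ring E, finite-dimensional over its center, admitting unital ring embeddings of both D₁ and D₂. (This answers Lance Small's question negatively: two finite-dimensional division algebras over fields of the same characteristic need not embed in a common finite-dimensional division algebra.) -/
/-- A division algebra: a division ring that is finite-dimensional as a vector space
over its center. -/
structure FinDimDivisionAlgebra : Type 1 where
  carrier : Type
  [divisionRing : DivisionRing carrier]
  [finiteDimensional : FiniteDimensional (Subring.center carrier) carrier]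

attribute [instance] FinDimDivisionAlgebra.divisionRing
attribute [instance] FinDimDivisionAlgebra.finiteDimensional

open Polynomial IntermediateField in
/-- If neither `a` nor `-a` is a square, then `X ^ (2 ^ m) - a` is irreducible. -/
theorem small_irreducible_two_pow {K : Type} [Field K] (m : ℕ) {a : K}
    (h1 : ∀ b : K, b ^ 2 ≠ a) (h2 : ∀ b : K, b ^ 2 ≠ -a) :
    Irreducible (X ^ (2 ^ m) - C a) := by
  induction m generalizing K a with
  | zero => simpa using irreducible_X_sub_C a
  | succ m IH =>
    rw [pow_succ]
    apply X_pow_mul_sub_C_irreducible (X_pow_sub_C_irreducible_of_prime Nat.prime_two h1)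
    intro E _ _ x hx
    have hint : IsIntegral K x := not_not.mp fun h ↦ by
      simpa only [degree_zero, degree_X_pow_sub_C Nat.prime_two.pos,
        WithBot.natCast_ne_bot] using congr_arg degree (hx.symm.trans (dif_neg h))
    have hfr : Module.finrank K K⟮x⟯ = 2 := by
      rw [adjoin.finrank hint, hx, natDegree_X_pow_sub_C]
    have hnorm : Algebra.norm K (AdjoinSimple.gen K x) = -a := by
      rw [← adjoin.powerBasis_gen hint, Algebra.PowerBasis.norm_gen_eq_coeff_zero_minpoly]
      simp [minpoly_gen, hx]
    have hnorm' : Algebra.norm K (-AdjoinSimple.gen K x) = -a := by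
      have : -AdjoinSimple.gen K x = algebraMap K K⟮x⟯ (-1) * AdjoinSimple.gen K x := by simp
      rw [this, map_mul, Algebra.norm_algebraMap, hfr, hnorm]
      simp
    apply IH
    · intro b hb
      exact h2 (Algebra.norm K b) (by rw [← map_pow, hb, hnorm])
    · intro b hb
      exact h2 (Algebra.norm K b) (by rw [← map_pow, hb, hnorm'])

theorem small_three_dvd {x y : ℤ} (h : (3 : ℤ) ∣ x ^ 2 + y ^ 2) : 3 ∣ x ∧ 3 ∣ y := by
  have hx : x % 3 = 0 ∨ x % 3 = 1 ∨ x % 3 = 2 := by omega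
  have hy : y % 3 = 0 ∨ y % 3 = 1 ∨ y % 3 = 2 := by omega
  have h' : (x ^ 2 + y ^ 2) % 3 = 0 := Int.emod_eq_zero_of_dvd h
  rcases hx with hx | hx | hx <;> rcases hy with hy | hy | hy <;>
    simp [Int.add_emod, pow_two, Int.mul_emod, hx, hy] at h' <;> omega

theorem small_pow_dvd (n : ℕ) : ∀ x y z w : ℤ, x ^ 2 + y ^ 2 = 3 * (z ^ 2 + w ^ 2) →
    3 ^ n ∣ x ∧ 3 ^ n ∣ y ∧ 3 ^ n ∣ z ∧ 3 ^ n ∣ w := by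
  induction n with
  | zero => intros; simp
  | succ n IH =>
    intro x y z w h
    obtain ⟨⟨x, rfl⟩, ⟨y, rfl⟩⟩ := small_three_dvd (Dvd.intro _ h.symm)
    have h2 : z ^ 2 + w ^ 2 = 3 * (x ^ 2 + y ^ 2) := by linarith
    obtain ⟨⟨z, rfl⟩, ⟨w, rfl⟩⟩ := small_three_dvd (Dvd.intro _ h2.symm)
    obtain ⟨a, b, c, d⟩ := IH x y z w (by linarith)
    rw [pow_succ']
    exact ⟨mul_dvd_mul_left _ a, mul_dvd_mul_left _ b, mul_dvd_mul_left _ c,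
      mul_dvd_mul_left _ d⟩

theorem small_eq_zero_of_pow_dvd {x : ℤ} (h : ∀ n : ℕ, (3 : ℤ) ^ n ∣ x) : x = 0 := by
  apply Int.eq_zero_of_abs_lt_dvd (h x.natAbs)
  have : x.natAbs < 3 ^ x.natAbs := Nat.lt_pow_self (by norm_num)
  rw [Int.abs_eq_natAbs]
  exact_mod_cast this

theorem small_aniso (x y z w : ℚ) (h : x ^ 2 + y ^ 2 = 3 * (z ^ 2 + w ^ 2)) :
    x = 0 ∧ y = 0 ∧ z = 0 ∧ w = 0 := by
  have hx := Rat.num_div_den x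
  have hy := Rat.num_div_den y
  have hz := Rat.num_div_den z
  have hw := Rat.num_div_den w
  have px : (x.den : ℚ) ≠ 0 := by exact_mod_cast x.den_nz
  have py : (y.den : ℚ) ≠ 0 := by exact_mod_cast y.den_nz
  have pz : (z.den : ℚ) ≠ 0 := by exact_mod_cast z.den_nz
  have pw : (w.den : ℚ) ≠ 0 := by exact_mod_cast w.den_nz
  have ex : (x.num : ℚ) = x * x.den := by field_simp at hx; linarith
  have ey : (y.num : ℚ) = y * y.den := by field_simp at hy; linarith
  have ez : (z.num : ℚ) = z * z.den := by field_simp at hz; linarith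
  have ew : (w.num : ℚ) = w * w.den := by field_simp at hw; linarith
  have key : (x.num * y.den * z.den * w.den) ^ 2 + (y.num * x.den * z.den * w.den) ^ 2
      = 3 * ((z.num * x.den * y.den * w.den) ^ 2 + (w.num * x.den * y.den * z.den) ^ 2) := by
    have : ((x.num * y.den * z.den * w.den) ^ 2 + (y.num * x.den * z.den * w.den) ^ 2 : ℚ)
      = 3 * ((z.num * x.den * y.den * w.den) ^ 2 + (w.num * x.den * y.den * z.den) ^ 2) := by
      rw [ex, ey, ez, ew]
      linear_combination ((x.den : ℚ) * y.den * z.den * w.den) ^ 2 * h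
    exact_mod_cast this
  have H := fun n => small_pow_dvd n _ _ _ _ key
  have a := small_eq_zero_of_pow_dvd (fun n => (H n).1)
  have b := small_eq_zero_of_pow_dvd (fun n => (H n).2.1)
  have c := small_eq_zero_of_pow_dvd (fun n => (H n).2.2.1)
  have d := small_eq_zero_of_pow_dvd (fun n => (H n).2.2.2)
  simp at a b c d
  exact ⟨a, b, c, d⟩

/-- The quaternion algebra `(-1, 3)` over `ℚ`. -/
abbrev SmallQuat : Type := QuaternionAlgebra ℚ (-1) 0 3

theorem smallQuat_unit (a : SmallQuat) : IsUnit a ∨ a = 0 := by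
  by_cases ha : a = 0
  · exact Or.inr ha
  left
  obtain ⟨x, y, z, w⟩ := a
  have hN : x ^ 2 + y ^ 2 - 3 * (z ^ 2 + w ^ 2) ≠ 0 := by
    intro h
    obtain ⟨rfl, rfl, rfl, rfl⟩ := small_aniso x y z w (by linarith)
    exact ha rfl
  set N := x ^ 2 + y ^ 2 - 3 * (z ^ 2 + w ^ 2) with hNdef
  refine isUnit_iff_exists.2 ⟨⟨x / N, -y / N, -z / N, -w / N⟩, ?_, ?_⟩ <;>
    ext <;> simp <;> field_simp <;> (try rw [hNdef]) <;> ring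

noncomputable instance smallQuatDivisionRing : DivisionRing SmallQuat :=
  DivisionRing.ofIsUnitOrEqZero smallQuat_unit

theorem smallQuat_central (q : ℚ) : (⟨q, 0, 0, 0⟩ : SmallQuat) ∈ Subring.center SmallQuat := by
  rw [Subring.mem_center_iff]
  rintro ⟨x, y, z, w⟩
  ext <;> simp <;> ring

theorem smallQuat_finite : FiniteDimensional (Subring.center SmallQuat) SmallQuat := by
  classical
  refine Module.finite_def.2 ⟨({⟨1, 0, 0, 0⟩, ⟨0, 1, 0, 0⟩, ⟨0, 0, 1, 0⟩, ⟨0, 0, 0, 1⟩} :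
    Finset SmallQuat), ?_⟩
  rw [eq_top_iff]
  rintro ⟨x, y, z, w⟩ -
  have e : (⟨x, y, z, w⟩ : SmallQuat) =
      (⟨_, smallQuat_central x⟩ : Subring.center SmallQuat) • (⟨1, 0, 0, 0⟩ : SmallQuat)
      + (⟨_, smallQuat_central y⟩ : Subring.center SmallQuat) • (⟨0, 1, 0, 0⟩ : SmallQuat)
      + (⟨_, smallQuat_central z⟩ : Subring.center SmallQuat) • (⟨0, 0, 1, 0⟩ : SmallQuat)
      + (⟨_, smallQuat_central w⟩ : Subring.center SmallQuat) • (⟨0, 0, 0, 1⟩ : SmallQuat) := by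
    simp only [Subring.smul_def, smul_eq_mul]
    ext <;> simp
  rw [e]
  refine add_mem (add_mem (add_mem ?_ ?_) ?_) ?_ <;>
    exact Submodule.smul_mem _ _ (Submodule.subset_span (by simp))

theorem smallQuat_charZero : CharZero SmallQuat := by
  refine charZero_of_inj_zero fun n hn => ?_
  have := congrArg QuaternionAlgebra.re hn
  simpa using this

/-- A noncentral square root cannot have a square root in the center. -/
theorem small_not_sq {E : Type} [DivisionRing E] (f : SmallQuat →+* E) (u v : SmallQuat)
    (huv : u * v ≠ v * u) (b : E) (hb : b ∈ Subring.center E) (h : b * b = f (u * u)) :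
    False := by
  rw [Subring.mem_center_iff] at hb
  have h0 : (f u - b) * (f u + b) = 0 := by
    rw [sub_mul, mul_add, mul_add, ← map_mul, ← h, hb (f u)]
    abel
  have hc : f u = b ∨ f u = -b := by
    rcases mul_eq_zero.1 h0 with h | h
    · exact Or.inl (sub_eq_zero.1 h)
    · exact Or.inr (eq_neg_of_add_eq_zero_left h)
  apply huv
  apply f.injective
  rw [map_mul, map_mul]
  rcases hc with h | h <;> rw [h]
  · exact (hb _).symm
  · rw [neg_mul, mul_neg, hb]

open Polynomial in
theorem small_no_common {E : Type} [DivisionRing E] [FiniteDimensional (Subring.center E) E]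
    (f₁ : ℂ →+* E) (f₂ : SmallQuat →+* E) : False := by
  have hirr : ∀ m : ℕ, Irreducible (X ^ (2 ^ m) - C (3 : Subring.center E)) := by
    intro m
    apply small_irreducible_two_pow
    · intro b hb
      refine small_not_sq f₂ ⟨0, 0, 1, 0⟩ ⟨0, 1, 0, 0⟩ ?_ b b.2 ?_
      · intro h
        have := congrArg QuaternionAlgebra.imK h
        norm_num at this
      · have e : (⟨0, 0, 1, 0⟩ * ⟨0, 0, 1, 0⟩ : SmallQuat) = (1 + 1 + 1 : SmallQuat) := by
          ext <;> simp <;> norm_num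
        rw [e, map_add, map_add, map_one, (by norm_num : (1 + 1 + 1 : E) = 3), ← pow_two]
        exact congrArg Subtype.val hb
    · intro b hb
      refine small_not_sq f₂ ⟨0, 3, 1, 1⟩ ⟨0, 1, 0, 0⟩ ?_ b b.2 ?_
      · intro h
        have := congrArg QuaternionAlgebra.imK h
        norm_num at this
      · have e : (⟨0, 3, 1, 1⟩ * ⟨0, 3, 1, 1⟩ : SmallQuat) = -(1 + 1 + 1 : SmallQuat) := by
          ext <;> simp <;> norm_num
        rw [e, map_neg, map_add, map_add, map_one, (by norm_num : (1 + 1 + 1 : E) = 3), ← pow_two]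
        exact congrArg Subtype.val hb
  set n := Module.finrank (Subring.center E) E with hn
  obtain ⟨c, hc⟩ := IsAlgClosed.exists_pow_nat_eq (3 : ℂ) (n := 2 ^ n) (by positivity)
  have hroot : (aeval (f₁ c)) (X ^ (2 ^ n) - C (3 : Subring.center E)) = 0 := by
    rw [map_sub, aeval_X_pow, aeval_C, ← map_pow, hc, map_ofNat, map_ofNat, sub_self]
  have hmin := minpoly.eq_of_irreducible_of_monic (hirr n) hroot
    (monic_X_pow_sub_C _ (by positivity))
  have hle := minpoly.natDegree_le (A := Subring.center E) (f₁ c)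
  rw [← hmin, natDegree_X_pow_sub_C, ← hn] at hle
  exact absurd hle (not_le.2 (Nat.lt_pow_self (by norm_num)))

theorem small_complex_finite : FiniteDimensional (Subring.center ℂ) ℂ := by
  refine Module.finite_def.2 ⟨({1} : Finset ℂ), ?_⟩
  rw [eq_top_iff]
  intro x _
  have hx : x ∈ Subring.center ℂ := by
    rw [Subring.mem_center_iff]; intro g; ring
  have e : x = (⟨x, hx⟩ : Subring.center ℂ) • (1 : ℂ) := by simp [Subring.smul_def]
  rw [e]
  exact Submodule.smul_mem _ _ (Submodule.subset_span (by simp))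

/-- There exist division rings `D₁` and `D₂`, each finite-dimensional over its center,
whose centers are fields of characteristic zero, such that no division ring `E`,
finite-dimensional over its center, admits unital ring embeddings of both `D₁` and `D₂`. -/
theorem small_question_has_negative_answer :
    ∃ D₁ D₂ : FinDimDivisionAlgebra,
      CharZero (Subring.center D₁.carrier) ∧
      CharZero (Subring.center D₂.carrier) ∧
      ¬ ∃ (E : FinDimDivisionAlgebra) (f₁ : D₁.carrier →+* E.carrier)
          (f₂ : D₂.carrier →+* E.carrier),
          Function.Injective f₁ ∧ Function.Injective f₂ := by
  have h1 := small_complex_finite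
  have h2 := smallQuat_finite
  have h3 := smallQuat_charZero
  refine ⟨⟨ℂ⟩, ⟨SmallQuat⟩, ?_, ?_, ?_⟩
  · exact (inferInstance : CharZero (Subring.center ℂ))
  · exact (inferInstance : CharZero (Subring.center SmallQuat))
  · rintro ⟨E, f₁, f₂, -, -⟩
    exact small_no_common f₁ f₂
end

section
/- Let p be a prime, let Ω be a field of characteristic zero, and let L and K be intermediate fields of Ω/ℚ such that L/ℚ is a Galois extension whose Galois group (with the Krull topology) is isomorphic as a topological group to the additive group of the p-adic integers ℤ_p. If the compositum L⊔K (the subfield of Ω generated by L and K) is finite-dimensional over K, then L ⊆ K. -/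
theorem le_of_compositum_finiteDimensional_of_galoisGroup_padic
    (p : ℕ) [Fact p.Prime] (Ω : Type) [Field Ω] [CharZero Ω]
    (L K : IntermediateField ℚ Ω) [IsGalois ℚ L]
    (e : (L ≃ₐ[ℚ] L) ≃ₜ Multiplicative ℤ_[p])
    (he : ∀ x y : (L ≃ₐ[ℚ] L), e (x * y) = e x * e y)
    (hfin : FiniteDimensional K
      (IntermediateField.adjoin K ((L : IntermediateField ℚ Ω) : Set Ω))) :
    L ≤ K := by
  set M := IntermediateField.adjoin K ((L : IntermediateField ℚ Ω) : Set Ω) with hM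
  have hLM : ∀ x : L, (x : Ω) ∈ M := fun x => IntermediateField.subset_adjoin K _ x.2
  let f : L →+* M :=
    { toFun := fun x => ⟨x, hLM x⟩
      map_one' := rfl
      map_mul' := fun _ _ => rfl
      map_zero' := rfl
      map_add' := fun _ _ => rfl }
  let _ : Algebra L M := f.toAlgebra
  have : IsScalarTower ℚ L M := IsScalarTower.of_algebraMap_eq' (Subsingleton.elim _ _)
  have hn : Normal K M := by
    rw [normal_iff]
    intro x
    have hint : IsIntegral K x := Algebra.IsIntegral.isIntegral x
    refine ⟨hint, ?_⟩
    have hx : (x : Ω) ∈ IntermediateField.adjoin K ((L : IntermediateField ℚ Ω) : Set Ω) := x.2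
    have h := IntermediateField.splits_of_mem_adjoin (F := K) (K := Ω) (L := M)
      (S := ((L : IntermediateField ℚ Ω) : Set Ω)) (fun y hy => ?_) hx
    · rw [← minpoly.algebraMap_eq (B' := Ω) (algebraMap M Ω).injective x]
      exact h
    · have hyi : IsIntegral ℚ (⟨y, hy⟩ : L) := Algebra.IsIntegral.isIntegral _
      have hyi' : IsIntegral ℚ y := hyi.map L.val
      refine ⟨hyi'.tower_top, ?_⟩
      have hs := (Normal.splits (inferInstance : Normal ℚ L) (⟨y, hy⟩ : L)).map (algebraMap L M)
      rw [Polynomial.map_map, ← minpoly.algebraMap_eq (B' := Ω) (algebraMap L Ω).injective] at hs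
      refine Polynomial.Splits.of_dvd hs ?_ ?_
      · exact Polynomial.map_ne_zero (minpoly.ne_zero hyi')
      · have := Polynomial.map_dvd (algebraMap K M) (minpoly.dvd_map_of_isScalarTower ℚ K y)
        rw [Polynomial.map_map] at this
        have hc : (algebraMap K M).comp (algebraMap ℚ K) = (algebraMap L M).comp (algebraMap ℚ L) :=
          Subsingleton.elim _ _
        rw [hc] at this
        exact this
  have : IsGalois K M := ⟨⟩
  have htors : ∀ g : L ≃ₐ[ℚ] L, IsOfFinOrder g → g = 1 := by
    intro g hg
    let φ : (L ≃ₐ[ℚ] L) →* Multiplicative ℤ_[p] := MonoidHom.mk' e he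
    have hφ : IsOfFinOrder (φ g) := φ.isOfFinOrder hg
    have h1 : φ g = 1 := by
      obtain ⟨n, hn, h⟩ := isOfFinOrder_iff_pow_eq_one.1 hφ
      have h2 : n • (Multiplicative.toAdd (φ g)) = 0 := by
        rw [← toAdd_pow, h]; rfl
      rcases smul_eq_zero.1 h2 with h3 | h3
      · omega
      · exact h3
    exact e.injective (h1.trans (map_one φ).symm)
  intro x hx
  have hfix : ∀ σ : M ≃ₐ[K] M, σ ⟨x, hLM ⟨x, hx⟩⟩ = ⟨x, hLM ⟨x, hx⟩⟩ := by
    intro σ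
    have h1 := htors (IntermediateField.restrictRestrictAlgEquivMapHom ℚ L K M σ)
      (MonoidHom.isOfFinOrder _ (isOfFinOrder_of_finite σ))
    have h2 := AlgEquiv.restrictNormal_commutes (σ.restrictScalars ℚ) L ⟨x, hx⟩
    have h3 : (σ.restrictScalars ℚ).restrictNormal L = 1 := h1
    rw [h3] at h2
    exact h2.symm
  obtain ⟨k, hk⟩ := (IsGalois.mem_range_algebraMap_iff_fixed (F := K) (E := M) _).2 hfix
  have : (k : Ω) = x := congrArg (fun z : M => (z : Ω)) hk
  exact this ▸ k.2
end

section
/- Let p₁ and p₂ be distinct primes. Let D be a central division algebra over ℚ of degree p₁ (i.e., a division ring with center ℚ and dim_ℚ D = p₁²). Let F₁/ℚ be an algebraic field extension such that every intermediate field of F₁/ℚ that is finite-dimensional over ℚ has degree a power of p₂. Then the tensor product D ⊗_ℚ F₁ is a division ring. -/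
open scoped TensorProduct

theorem aux_repr_mul {K D M ι : Type} [Field K] [DivisionRing D] [Algebra K D] [Field M] [Algebra K M]
    (b : Module.Basis ι K M) (x : D ⊗[K] M) (d : D) (i : ι) :
    (b.baseChange D).repr (x * (d ⊗ₜ 1)) i = (b.baseChange D).repr x i * d := by
  induction x using TensorProduct.induction_on with
  | zero => simp
  | tmul a m => simp [Algebra.TensorProduct.tmul_mul_tmul]
  | add x y hx hy => simp [add_mul, hx, hy]

theorem aux_repr_mul_left {K D M ι : Type} [Field K] [DivisionRing D] [Algebra K D] [Field M]
    [Algebra K M] (b : Module.Basis ι K M) (x : D ⊗[K] M) (d : D) (i : ι) :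
    (b.baseChange D).repr ((d ⊗ₜ 1) * x) i = d * (b.baseChange D).repr x i := by
  induction x using TensorProduct.induction_on with
  | zero => simp
  | tmul a m => simp [Algebra.TensorProduct.tmul_mul_tmul]
  | add x y hx hy => simp [mul_add, hx, hy]

theorem aux_simple {K D M : Type} [Field K] [DivisionRing D] [Algebra K D] [Field M] [Algebra K M]
    (hD : Subalgebra.center K D = ⊥) : IsSimpleRing (D ⊗[K] M) := by
  rw [isSimpleRing_iff_isTwoSided_imp]
  refine ⟨inferInstance, fun I hI => ?_⟩
  by_cases h0 : I = ⊥
  · exact Or.inl h0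
  right
  let b := Module.Basis.ofVectorSpace K M
  let B := b.baseChange D
  have key : ∀ n : ℕ, ∀ x ∈ I, x ≠ 0 → (B.repr x).support.card = n → I = ⊤ := by
    intro n
    induction n using Nat.strong_induction_on with
    | _ n ih =>
      intro x hxI hx0 hn
      have hr : B.repr x ≠ 0 := by simpa using hx0
      obtain ⟨i, hi⟩ := Finsupp.support_nonempty_iff.mpr hr
      have hi' : B.repr x i ≠ 0 := by simpa using hi
      let c := (B.repr x i)⁻¹
      let y := (c ⊗ₜ[K] (1 : M)) * x
      have hyI : y ∈ I := I.mul_mem_left _ hxI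
      have hyr : ∀ j, B.repr y j = c * B.repr x j := fun j => aux_repr_mul_left b x c j
      have hyi : B.repr y i = 1 := by rw [hyr]; exact inv_mul_cancel₀ hi'
      have hcomm : (∀ d : D, (d ⊗ₜ[K] (1 : M)) * y - y * (d ⊗ₜ 1) = 0) ∨ I = ⊤ := by
        by_contra hcon
        push Not at hcon
        obtain ⟨⟨d, hd⟩, hT⟩ := hcon
        apply hT
        have hzr : ∀ j, B.repr ((d ⊗ₜ[K] (1 : M)) * y - y * (d ⊗ₜ 1)) j
            = d * B.repr y j - B.repr y j * d := by
          intro j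
          rw [map_sub, Finsupp.sub_apply]
          exact congrArg₂ _ (aux_repr_mul_left b y d j) (aux_repr_mul b y d j)
        refine ih _ ?_ _ (I.sub_mem (I.mul_mem_left _ hyI) (I.mul_mem_right _ hyI)) hd rfl
        rw [← hn]
        apply Finset.card_lt_card
        rw [Finset.ssubset_iff_of_subset]
        · exact ⟨i, hi, by rw [Finsupp.mem_support_iff, hzr, hyi]; simp⟩
        · intro j hj
          rw [Finsupp.mem_support_iff, hzr, hyr] at hj
          rw [Finsupp.mem_support_iff]
          intro h
          simp [h] at hj
      rcases hcomm with hcomm | h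
      swap
      · exact h
      have hcen : ∀ j, ∃ q : K, algebraMap K D q = B.repr y j := by
        intro j
        have : B.repr y j ∈ Subalgebra.center K D := by
          rw [Subalgebra.mem_center_iff]
          intro d
          have h1 := aux_repr_mul_left b y d j
          have h2 := aux_repr_mul b y d j
          rw [sub_eq_zero.mp (hcomm d)] at h1
          exact h1.symm.trans h2
        rw [hD] at this
        exact Algebra.mem_bot.mp this
      choose q hq using hcen
      have hy : ∃ m : M, y = (1 : D) ⊗ₜ[K] m := by
        refine ⟨(B.repr y).sum fun j _ => q j • b j, ?_⟩
        conv_lhs => rw [← B.linearCombination_repr y, Finsupp.linearCombination_apply]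
        rw [Finsupp.sum, Finsupp.sum, TensorProduct.tmul_sum]
        refine Finset.sum_congr rfl fun j _ => ?_
        rw [← hq]
        simp [B, TensorProduct.smul_tmul', Algebra.algebraMap_eq_smul_one]
      obtain ⟨m, hm⟩ := hy
      have hm0 : m ≠ 0 := by
        rintro rfl
        rw [TensorProduct.tmul_zero] at hm
        rw [hm] at hyi
        simp at hyi
      rw [Ideal.eq_top_iff_one]
      have := I.mul_mem_left ((1 : D) ⊗ₜ[K] m⁻¹) hyI
      rw [hm] at this
      simpa [Algebra.TensorProduct.tmul_mul_tmul, inv_mul_cancel₀ hm0,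
        Algebra.TensorProduct.one_def] using this
  obtain ⟨x, hx, hx0⟩ := Submodule.exists_mem_ne_zero_of_ne_bot h0
  exact key _ x hx hx0 rfl

open scoped Matrix.Module in
theorem aux_dvd {K R E : Type} [Field K] [DivisionRing R] [Algebra K R] [DivisionRing E]
    [Algebra K E] [Module.Finite K E] {k : ℕ} (f : R →ₐ[K] Matrix (Fin k) (Fin k) E) :
    Module.finrank K R ∣ k * Module.finrank K E := by
  let _ : Module R (Fin k → E) := Module.compHom _ f.toRingHom
  have : IsScalarTower K R (Fin k → E) := by
    refine ⟨fun q d v => ?_⟩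
    change f (q • d) • v = q • (f d • v)
    rw [map_smul, smul_assoc]
  refine ⟨Module.finrank R (Fin k → E), ?_⟩
  rw [Module.finrank_mul_finrank, Module.finrank_pi_fintype]
  simp

theorem aux_finite {K D M : Type} [Field K] [DivisionRing D] [Algebra K D] [Field M] [Algebra K M]
    (hD : Subalgebra.center K D = ⊥) [FiniteDimensional K D] [FiniteDimensional K M]
    (p : ℕ) (hp : p.Prime) (hdeg : Module.finrank K D = p ^ 2)
    (hcop : p.Coprime (Module.finrank K M)) (x : D ⊗[K] M) (hx : x ≠ 0) : IsUnit x := by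
  have := aux_simple (M := M) hD
  have : IsArtinianRing (D ⊗[K] M) := IsArtinianRing.of_finite K _
  obtain ⟨k, hk, E, _, _, _, ⟨e⟩⟩ :=
    IsSimpleRing.exists_algEquiv_matrix_divisionRing_finite K (D ⊗[K] M)
  have hpos : 0 < k := Nat.pos_of_ne_zero hk.out
  have h1 : p ^ 2 * Module.finrank K M = k * k * Module.finrank K E := by
    have := e.toLinearEquiv.finrank_eq
    rw [Module.finrank_tensorProduct, Module.finrank_matrix] at this
    simpa [hdeg] using this
  have h2 : Module.finrank K D ∣ k * Module.finrank K E :=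
    aux_dvd (e.toAlgHom.comp (Algebra.TensorProduct.includeLeft : D →ₐ[K] D ⊗[K] M))
  have h3 : Module.finrank K M ∣ k * Module.finrank K E :=
    aux_dvd (e.toAlgHom.comp (Algebra.TensorProduct.includeRight : M →ₐ[K] D ⊗[K] M))
  rw [hdeg] at h2
  obtain ⟨r, hr⟩ := h2
  obtain ⟨s, hs⟩ := h3
  have hMpos : 0 < Module.finrank K M := Module.finrank_pos
  have h4 : Module.finrank K M = k * r := by
    apply Nat.eq_of_mul_eq_mul_left (pow_pos hp.pos 2)
    rw [h1, mul_assoc, hr]; ring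
  have h5 : p ^ 2 = k * s := by
    apply Nat.eq_of_mul_eq_mul_right hMpos
    rw [h1, mul_assoc, hs]; ring
  have hk1 : k = 1 := by
    exact Nat.eq_one_of_dvd_coprimes (Nat.Coprime.pow_left 2 hcop) ⟨s, h5⟩ ⟨r, h4⟩
  subst hk1
  have hu : IsUnit (e x) := by
    have : e x ≠ 0 := by simpa using hx
    let g := Matrix.uniqueRingEquiv (m := Fin 1) (A := E)
    rw [← MulEquiv.isUnit_map g, isUnit_iff_ne_zero]
    intro h
    apply this
    ext i j
    rw [Subsingleton.elim i default, Subsingleton.elim j default]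
    exact h
  exact (MulEquiv.isUnit_map e).mp hu

theorem aux_descend {K D F : Type} [Field K] [DivisionRing D] [Algebra K D] [Field F] [Algebra K F]
    [Algebra.IsAlgebraic K F] (x : D ⊗[K] F) :
    ∃ (M : IntermediateField K F) (_ : FiniteDimensional K M) (y : D ⊗[K] M),
      Algebra.TensorProduct.map (AlgHom.id K D) M.val y = x := by
  induction x using TensorProduct.induction_on with
  | zero => exact ⟨⊥, inferInstance, 0, by simp⟩
  | tmul a m =>
    refine ⟨IntermediateField.adjoin K {m}, IntermediateField.adjoin.finiteDimensional
      (Algebra.IsIntegral.isIntegral m),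
      a ⊗ₜ ⟨m, IntermediateField.mem_adjoin_simple_self K m⟩, by simp⟩
  | add x y hx hy =>
    obtain ⟨M, _, u, hu⟩ := hx
    obtain ⟨N, _, v, hv⟩ := hy
    refine ⟨M ⊔ N, inferInstance,
      Algebra.TensorProduct.map (AlgHom.id K D) (IntermediateField.inclusion le_sup_left) u +
      Algebra.TensorProduct.map (AlgHom.id K D) (IntermediateField.inclusion le_sup_right) v, ?_⟩
    rw [map_add, ← hu, ← hv]
    congr 1
    · rw [← AlgHom.comp_apply, ← Algebra.TensorProduct.map_comp]; rfl
    · rw [← AlgHom.comp_apply, ← Algebra.TensorProduct.map_comp]; rfl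

theorem aux_main {K D F : Type} [Field K] [DivisionRing D] [Algebra K D] [Field F] [Algebra K F]
    [Algebra.IsAlgebraic K F] (p₁ p₂ : ℕ) (hp₁ : p₁.Prime) (hp₂ : p₂.Prime) (hne : p₁ ≠ p₂)
    (hDcentral : Subalgebra.center K D = ⊥)
    (hDdeg : Module.finrank K D = p₁ ^ 2)
    (hF₁ : ∀ M : IntermediateField K F, FiniteDimensional K M →
      ∃ n : ℕ, Module.finrank K M = p₂ ^ n) :
    Nontrivial (D ⊗[K] F) ∧ ∀ x : D ⊗[K] F, x ≠ 0 → IsUnit x := by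
  refine ⟨inferInstance, fun x hx => ?_⟩
  obtain ⟨M, hM, y, rfl⟩ := aux_descend x
  have hfd : FiniteDimensional K D :=
    Module.finite_of_finrank_pos (by rw [hDdeg]; exact pow_pos hp₁.pos 2)
  obtain ⟨n, hn⟩ := hF₁ M hM
  refine IsUnit.map _ (aux_finite hDcentral p₁ hp₁ hDdeg ?_ y ?_)
  · rw [hn]
    exact Nat.Coprime.pow_right n ((Nat.coprime_primes hp₁ hp₂).mpr hne)
  · rintro rfl
    simp at hx

/-- Let `p₁ ≠ p₂` be primes, `D` a central division algebra over `ℚ` of degree `p₁`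
(a division ring with center `ℚ` and `dim_ℚ D = p₁²`), and `F₁/ℚ` an algebraic field
extension all of whose finite-dimensional intermediate fields have degree a power of
`p₂` over `ℚ`.  Then `D ⊗_ℚ F₁` is a division ring (it is nontrivial and every nonzero
element is a unit). -/
theorem tensor_isDivisionRing_of_coprime_tower
    (p₁ p₂ : ℕ) (hp₁ : p₁.Prime) (hp₂ : p₂.Prime) (hne : p₁ ≠ p₂)
    (D : Type) [DivisionRing D] [Algebra ℚ D]
    (hDcentral : Subalgebra.center ℚ D = ⊥)
    (hDdeg : Module.finrank ℚ D = p₁ ^ 2)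
    (F₁ : Type) [Field F₁] [Algebra ℚ F₁] [Algebra.IsAlgebraic ℚ F₁]
    (hF₁ : ∀ M : IntermediateField ℚ F₁, FiniteDimensional ℚ M →
      ∃ n : ℕ, Module.finrank ℚ M = p₂ ^ n) :
    Nontrivial (D ⊗[ℚ] F₁) ∧ ∀ x : D ⊗[ℚ] F₁, x ≠ 0 → IsUnit x := by
  exact aux_main p₁ p₂ hp₁ hp₂ hne hDcentral hDdeg hF₁
end

section
/- Let p be a prime and let L/ℚ be a Galois field extension that is cyclic of degree p (i.e., [L:ℚ] = p and Gal(L/ℚ) is cyclic of order p). Then there exists a central division algebra D over ℚ of degree p (a division ring with center ℚ and dim_ℚ D = p²) together with a ℚ-algebra embedding of L into D; the image of L is a maximal subfield of D. -/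
/-- A `ℚ`-division algebra: a division ring equipped with a `ℚ`-algebra structure. -/
structure DivisionAlgebraOverQ : Type 1 where
  carrier : Type
  [divisionRing : DivisionRing carrier]
  [algebra : Algebra ℚ carrier]

attribute [instance] DivisionAlgebraOverQ.divisionRing
attribute [instance] DivisionAlgebraOverQ.algebra

section
open NumberField

lemma aux_split_or_inert (p : ℕ) (hp : p.Prime) (L : Type) [Field L] [NumberField L] [IsGalois ℚ L]
    (hdim : Module.finrank ℚ L = p) (q : ℕ) (hq : q.Prime) (hd : ¬ (q : ℤ) ∣ discr L) :
    (Ideal.span {(q : 𝓞 L)}).IsPrime ∨ ∃ P P' : Ideal (𝓞 L), P ≠ P' ∧ Prime P ∧ Prime P' ∧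
      Ideal.absNorm P = q ∧ Ideal.absNorm P' = q := by
  have hqZ : Prime (q : ℤ) := Nat.prime_iff_prime_int.mp hq
  have hunr := (not_dvd_discr_iff_isUnramifiedIn L (𝓞 L) hqZ).mp hd
  have hspan : (Ideal.span {(q : ℤ)}).IsPrime := by rwa [Ideal.span_singleton_prime hqZ.ne_zero]
  have hq0 : Ideal.span {(q : ℤ)} ≠ ⊥ := by simpa using hq.ne_zero
  have hmain := Ideal.ncard_primesOver_mul_ramificationIdxIn_mul_inertiaDegIn
    (Ideal.span {(q : ℤ)}) (𝓞 L) Gal(L/ℚ)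
  rw [IsGaloisGroup.card_eq_finrank Gal(L/ℚ) ℚ L, hdim] at hmain
  have hnorm : ∀ P ∈ Ideal.primesOver (Ideal.span {(q : ℤ)}) (𝓞 L),
      Prime P ∧ Ideal.absNorm P = q ^ (Ideal.inertiaDegIn (Ideal.span {(q : ℤ)}) (𝓞 L)) := by
    rintro P ⟨hP, hPo⟩
    refine ⟨Ideal.prime_of_isPrime (Ideal.ne_bot_of_liesOver_of_ne_bot hq0 P) hP, ?_⟩
    rw [Ideal.inertiaDegIn_eq_inertiaDeg (Ideal.span {(q : ℤ)}) P Gal(L/ℚ),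
      ← Ideal.absNorm_pow_inertiaDeg (Ideal.span {(q : ℤ)}) P]
    simp
  obtain ⟨P, hP⟩ := (inferInstance : Nonempty (Ideal.primesOver (Ideal.span {(q : ℤ)}) (𝓞 L)))
  have hP2 := hP
  obtain ⟨hPp, hPo⟩ := hP2
  rw [Ideal.ramificationIdxIn_eq_ramificationIdx (Ideal.span {(q : ℤ)}) P Gal(L/ℚ),
    hunr.ramificationIdx_eq_one hPo, one_mul] at hmain
  rcases (Nat.dvd_prime hp).mp (Dvd.intro_left _ hmain) with h1 | h1
  · right
    rw [h1, mul_one] at hmain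
    have : 1 < (Ideal.primesOver (Ideal.span {(q : ℤ)}) (𝓞 L)).ncard := hmain ▸ hp.one_lt
    rw [Set.one_lt_ncard (Set.finite_of_ncard_pos (by lia))] at this
    obtain ⟨a, ha, b, hb, hab⟩ := this
    refine ⟨a, b, hab, (hnorm a ha).1, (hnorm b hb).1, ?_, ?_⟩
    · simpa [h1] using (hnorm a ha).2
    · simpa [h1] using (hnorm b hb).2
  · left
    have hle : P ∣ Ideal.span {(q : 𝓞 L)} := by
      rw [Ideal.dvd_iff_le, Ideal.span_singleton_le_iff_mem]
      have : (q : ℤ) ∈ P.under ℤ := by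
        rw [← hPo.over]; exact Ideal.mem_span_singleton_self _
      simpa [Ideal.under, Ideal.mem_comap] using this
    obtain ⟨J, hJ⟩ := hle
    have h2 : Ideal.absNorm (Ideal.span {(q : 𝓞 L)}) = q ^ p := by
      rw [Ideal.absNorm_span_singleton]
      have := Algebra.norm_algebraMap (S := 𝓞 L) (q : ℤ)
      rw [RingOfIntegers.rank, hdim] at this
      simp at this
      simp [this, Int.natAbs_pow]
    have h3 := congrArg Ideal.absNorm hJ
    rw [h2, map_mul, (hnorm P hP).2, h1] at h3
    have : Ideal.absNorm J = 1 := by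
      have : 0 < q ^ p := pow_pos hq.pos _
      nlinarith
    rw [Ideal.absNorm_eq_one_iff] at this
    rw [hJ, this, Ideal.mul_top]
    exact hPp

lemma aux_pairs_card {X : Type*} (ν : X → ℕ) (hfin : ∀ s : ℝ, Finite {I : X // (ν I : ℝ) ≤ s})
    (c : ℝ) (hc : Filter.Tendsto (fun s : ℝ => (Nat.card {I : X // (ν I : ℝ) ≤ s} : ℝ) / s)
      Filter.atTop (nhds c)) (N : ℕ) (hN : 0 < N) (I : ℕ × ℕ → X)
    (hI : ∀ j k, ν (I (j, k)) = (1 + j * N) * (1 + k * N)) (hinj : Function.Injective I) : False := by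
  have key : ∀ J : ℕ, ∑ j ∈ Finset.range J, 1 / (((1 + j * N : ℕ) : ℝ) * N) ≤ c := by
    intro J
    have hlim : Filter.Tendsto (fun s : ℝ =>
        ∑ j ∈ Finset.range J, 1 / (((1 + j * N : ℕ) : ℝ) * N) - J * s⁻¹) Filter.atTop
        (nhds (∑ j ∈ Finset.range J, 1 / (((1 + j * N : ℕ) : ℝ) * N) - J * 0)) :=
      tendsto_const_nhds.sub (tendsto_inv_atTop_zero.const_mul _)
    rw [mul_zero, sub_zero] at hlim
    refine le_of_tendsto_of_tendsto hlim hc ?_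
    filter_upwards [Filter.eventually_gt_atTop 0] with s hs
    have := hfin s
    let K : ℕ → ℕ := fun j => ⌊s / (((1 + j * N : ℕ) : ℝ) * N)⌋₊
    let T : Finset (Σ _ : ℕ, ℕ) := (Finset.range J).sigma (fun j => Finset.range (K j))
    have hT : ∀ t ∈ T, (ν (I (t.1, t.2)) : ℝ) ≤ s := by
      rintro ⟨j, k⟩ ht
      simp only [T, Finset.mem_sigma, Finset.mem_range] at ht
      have hm : (0 : ℝ) < ((1 + j * N : ℕ) : ℝ) * N := by positivity
      have h1 : ((K j : ℕ) : ℝ) ≤ s / (((1 + j * N : ℕ) : ℝ) * N) := Nat.floor_le (by positivity)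
      rw [le_div_iff₀ hm] at h1
      rw [hI]
      refine le_trans ?_ h1
      have h2 : (1 + j * N) * (1 + k * N) ≤ K j * ((1 + j * N) * N) := by
        have : 1 + k * N ≤ K j * N := by
          have : (k + 1) * N ≤ K j * N := Nat.mul_le_mul_right _ ht.2
          nlinarith
        calc _ ≤ (1 + j * N) * (K j * N) := Nat.mul_le_mul_left _ this
          _ = _ := by ring
      exact_mod_cast h2
    have hcard : T.card ≤ Nat.card {I : X // (ν I : ℝ) ≤ s} := by
      have := Nat.card_le_card_of_injective
        (fun t : T => (⟨I (t.1.1, t.1.2), hT t.1 t.2⟩ : {I : X // (ν I : ℝ) ≤ s})) (by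
          rintro ⟨⟨a, b⟩, _⟩ ⟨⟨a', b'⟩, _⟩ h
          have := hinj (congrArg Subtype.val h)
          simp at this
          simp [this])
      simpa using this
    have hcard2 : T.card = ∑ j ∈ Finset.range J, K j := by simp [T]
    rw [le_div_iff₀ hs]
    calc _ = ∑ j ∈ Finset.range J, (s / (((1 + j * N : ℕ) : ℝ) * N) - 1) := by
          rw [Finset.sum_sub_distrib, sub_mul, Finset.sum_mul]
          simp only [Finset.sum_const, Finset.card_range, nsmul_eq_mul, mul_one]
          rw [mul_assoc, inv_mul_cancel₀ hs.ne', mul_one]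
          congr 1
          refine Finset.sum_congr rfl fun j _ => ?_
          ring
      _ ≤ ∑ j ∈ Finset.range J, (K j : ℝ) :=
          Finset.sum_le_sum fun j _ => (Nat.sub_one_lt_floor _).le
      _ = (T.card : ℝ) := by rw [hcard2]; push_cast; rfl
      _ ≤ _ := by exact_mod_cast hcard
  have hdiv := Real.tendsto_sum_range_one_div_nat_succ_atTop
  obtain ⟨J, hJ⟩ := (hdiv.eventually_gt_atTop (c * (N * N))).exists
  have hNN : (0 : ℝ) < N := by exact_mod_cast hN
  have : ∑ i ∈ Finset.range J, 1 / ((i : ℝ) + 1) ≤ c * (N * N) := by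
    rw [← div_le_iff₀ (by positivity), Finset.sum_div]
    refine le_trans (Finset.sum_le_sum fun j _ => ?_) (key J)
    rw [div_div]
    apply one_div_le_one_div_of_le (by positivity)
    push_cast
    rw [← mul_assoc]
    refine mul_le_mul_of_nonneg_right ?_ hNN.le
    have : (1 : ℝ) ≤ N := by exact_mod_cast hN
    nlinarith
  linarith

lemma aux_ideal_pairs {R : Type*} [CommRing R] [IsDedekindDomain R]
    (ν : Ideal R →* ℕ) (N : ℕ)
    (h : ∀ q : ℕ, q.Prime → q.Coprime N → ∃ P P' : Ideal R, P ≠ P' ∧ Prime P ∧ Prime P' ∧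
      ν P = q ∧ ν P' = q) :
    ∃ I : ℕ × ℕ → Ideal R, (∀ m n, m ≠ 0 → n ≠ 0 → m.Coprime N → n.Coprime N →
      ν (I (m, n)) = m * n) ∧ 
      ∀ m n m' n', m ≠ 0 → n ≠ 0 → m.Coprime N → n.Coprime N → m' ≠ 0 → n' ≠ 0 → m'.Coprime N → 
        n'.Coprime N → I (m, n) = I (m', n') → m = m' := by
  classical
  have h' : ∀ q : ℕ, ∃ P P' : Ideal R, q.Prime → q.Coprime N → P ≠ P' ∧ Prime P ∧ Prime P' ∧
      ν P = q ∧ ν P' = q := by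
    intro q
    by_cases hq : q.Prime ∧ q.Coprime N
    · obtain ⟨P, P', hh⟩ := h q hq.1 hq.2
      exact ⟨P, P', fun _ _ => hh⟩
    · exact ⟨⊥, ⊥, fun a b => absurd ⟨a, b⟩ hq⟩
  choose P P' hP using h'
  let M : ℕ × ℕ → Multiset (Ideal R) := fun mn =>
    (mn.1.primeFactorsList : Multiset ℕ).map P + (mn.2.primeFactorsList : Multiset ℕ).map P'
  have good : ∀ m q : ℕ, m.Coprime N → q ∈ (m.primeFactorsList : Multiset ℕ) →
      q.Prime ∧ q.Coprime N := by
    intro m q hm hq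
    have hq' : q ∈ m.primeFactorsList := hq
    exact ⟨Nat.prime_of_mem_primeFactorsList hq',
      Nat.Coprime.coprime_dvd_left (Nat.dvd_of_mem_primeFactorsList hq') hm⟩
  have hprod1 : ∀ m, m ≠ 0 → m.Coprime N →
      (((m.primeFactorsList : Multiset ℕ).map P).map ν) = m.primeFactorsList := by
    intro m hm hmN
    rw [Multiset.map_map]
    conv_rhs => rw [← Multiset.map_id (m.primeFactorsList : Multiset ℕ)]
    refine Multiset.map_congr rfl fun q hq => ?_
    obtain ⟨h1, h2⟩ := good m q hmN hq
    exact (hP q h1 h2).2.2.2.1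
  have hprod2 : ∀ m, m ≠ 0 → m.Coprime N →
      (((m.primeFactorsList : Multiset ℕ).map P').map ν) = m.primeFactorsList := by
    intro m hm hmN
    rw [Multiset.map_map]
    conv_rhs => rw [← Multiset.map_id (m.primeFactorsList : Multiset ℕ)]
    refine Multiset.map_congr rfl fun q hq => ?_
    obtain ⟨h1, h2⟩ := good m q hmN hq
    exact (hP q h1 h2).2.2.2.2
  have hMprime : ∀ m n, m.Coprime N → n.Coprime N → ∀ Q ∈ M (m, n), Prime Q := by
    intro m n hm hn Q hQ
    simp only [M, Multiset.mem_add, Multiset.mem_map] at hQ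
    rcases hQ with ⟨q, hq, rfl⟩ | ⟨q, hq, rfl⟩
    · obtain ⟨h1, h2⟩ := good m q hm hq
      exact (hP q h1 h2).2.1
    · obtain ⟨h1, h2⟩ := good n q hn hq
      exact (hP q h1 h2).2.2.1
  let G : Ideal R → Prop := fun Q => ∃ q : ℕ, q.Prime ∧ q.Coprime N ∧ Q = P q
  have hfilter : ∀ m n, m.Coprime N → n.Coprime N →
      (M (m, n)).filter G = (m.primeFactorsList : Multiset ℕ).map P := by
    intro m n hm hn
    simp only [M, Multiset.filter_add]
    rw [Multiset.filter_eq_self.mpr, Multiset.filter_eq_nil.mpr, add_zero]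
    · intro Q hQ
      rw [Multiset.mem_map] at hQ
      obtain ⟨q, hq, rfl⟩ := hQ
      obtain ⟨h1, h2⟩ := good n q hn hq
      rintro ⟨q', h1', h2', he⟩
      have : q = q' := by
        rw [← (hP q h1 h2).2.2.2.2, he, (hP q' h1' h2').2.2.2.1]
      subst this
      exact (hP q h1 h2).1 he.symm
    · intro Q hQ
      rw [Multiset.mem_map] at hQ
      obtain ⟨q, hq, rfl⟩ := hQ
      obtain ⟨h1, h2⟩ := good m q hm hq
      exact ⟨q, h1, h2, rfl⟩
  refine ⟨fun mn => (M mn).prod, ?_, ?_⟩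
  · intro m n hm hn hmN hnN
    simp only [M, Multiset.prod_add, map_mul, map_multiset_prod]
    rw [hprod1 m hm hmN, hprod2 n hn hnN]
    simp [Nat.prod_primeFactorsList hm, Nat.prod_primeFactorsList hn]
  · intro m n m' n' hm hn hmN hnN hm' hn' hmN' hnN' he
    have h1 := congrArg UniqueFactorizationMonoid.normalizedFactors he
    simp only at h1
    rw [UniqueFactorizationMonoid.normalizedFactors_prod_of_prime (hMprime m n hmN hnN),
      UniqueFactorizationMonoid.normalizedFactors_prod_of_prime (hMprime m' n' hmN' hnN')] at h1
    have h2 := congrArg (fun s => ((s.filter G).map ν).prod) h1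
    rw [hfilter m n hmN hnN, hfilter m' n' hmN' hnN', hprod1 m hm hmN, hprod1 m' hm' hmN'] at h2
    simpa [Nat.prod_primeFactorsList hm, Nat.prod_primeFactorsList hm'] using h2

lemma aux_exists_inert (p : ℕ) (hp : p.Prime) (L : Type) [Field L] [NumberField L] [IsGalois ℚ L]
    (hdim : Module.finrank ℚ L = p) :
    ∃ q : ℕ, q.Prime ∧ (Ideal.span {(q : 𝓞 L)}).IsPrime := by
  by_contra hcon
  push Not at hcon
  set N := (discr L).natAbs with hNdef
  have hN : 0 < N := Int.natAbs_pos.mpr (discr_ne_zero L)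
  obtain ⟨I, hI1, hI2⟩ := aux_ideal_pairs (R := 𝓞 L) (Ideal.absNorm : Ideal (𝓞 L) →*₀ ℕ).toMonoidHom N (by
    intro q hq hqN
    refine (aux_split_or_inert p hp L hdim q hq ?_).resolve_left (hcon q hq)
    intro hd
    rw [Int.natCast_dvd] at hd
    exact ((Nat.Prime.coprime_iff_not_dvd hq).mp hqN) hd)
  have cop : ∀ j, (1 + j * N).Coprime N := by intro j; simp
  have ne : ∀ j, (1 + j * N) ≠ 0 := by intro j; positivity
  refine aux_pairs_card (X := Ideal (𝓞 L)) (fun I => Ideal.absNorm I) ?_ _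
    (NumberField.Ideal.tendsto_norm_le_div_atTop L) N hN
    (fun jk => I (1 + jk.1 * N, 1 + jk.2 * N)) ?_ ?_
  · intro s
    refine Set.Finite.subset (Ideal.finite_setOfPred_absNorm_le ⌊s⌋₊) ?_
    intro I hI
    exact Nat.le_floor hI
  · intro j k
    exact hI1 _ _ (ne j) (ne k) (cop j) (cop k)
  · rintro ⟨j, k⟩ ⟨j', k'⟩ he
    simp only at he
    have h1 := hI2 _ _ _ _ (ne j) (ne k) (cop j) (cop k) (ne j') (ne k') (cop j') (cop k') he
    have h2 := congrArg Ideal.absNorm he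
    have h3 := hI1 _ _ (ne j) (ne k) (cop j) (cop k)
    have h4 := hI1 _ _ (ne j') (ne k') (cop j') (cop k')
    have h5 : (1 + j * N) * (1 + k * N) = (1 + j' * N) * (1 + k' * N) := by
      rw [← h3, ← h4]; exact h2
    rw [h1] at h5
    have h6 := Nat.eq_of_mul_eq_mul_left (Nat.pos_of_ne_zero (ne j')) h5
    have h7 : j = j' := Nat.eq_of_mul_eq_mul_right hN (by lia)
    have h8 : k = k' := Nat.eq_of_mul_eq_mul_right hN (by lia)
    rw [h7, h8]

lemma aux_val (L : Type) [Field L] [NumberField L] (q : ℕ) (hq : q.Prime)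
    (hP : (Ideal.span {(q : 𝓞 L)}).IsPrime) :
    ∃ v : Valuation L (WithZero (Multiplicative ℤ)), v (q : L) = WithZero.exp (-1 : ℤ) ∧
      ∀ (σ : L ≃ₐ[ℚ] L) (x : L), v (σ x) = v x := by
  have hq0 : (q : 𝓞 L) ≠ 0 := by exact_mod_cast hq.ne_zero
  let P : IsDedekindDomain.HeightOneSpectrum (𝓞 L) := ⟨Ideal.span {(q : 𝓞 L)}, hP, by simpa using hq0⟩
  have hle : ∀ (σ : L ≃ₐ[ℚ] L) (x : 𝓞 L), P.valuation L (σ x) ≤ P.valuation L x := by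
    intro σ x
    by_cases hx : x = 0
    · simp [hx]
    obtain ⟨n, hn⟩ : ∃ n : ℕ, P.intValuation x = WithZero.exp (-(n : ℤ)) :=
      ⟨_, P.intValuation_if_neg hx⟩
    let y : 𝓞 L := RingOfIntegers.mapRingHom (σ : L →+* L) x
    have hy : (y : L) = σ x := rfl
    rw [← hy, P.valuation_of_algebraMap, P.valuation_of_algebraMap, hn,
      P.intValuation_le_pow_iff_mem]
    have hx2 : x ∈ P.asIdeal ^ n := by rw [← P.intValuation_le_pow_iff_mem, hn]
    simp only [P, Ideal.span_singleton_pow, Ideal.mem_span_singleton] at hx2 ⊢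
    have := map_dvd (RingOfIntegers.mapRingHom (σ : L →+* L)) hx2
    simpa using this
  have heq : ∀ (σ : L ≃ₐ[ℚ] L) (x : 𝓞 L), P.valuation L (σ x) = P.valuation L x := by
    intro σ x
    refine le_antisymm (hle σ x) ?_
    have := hle σ.symm (RingOfIntegers.mapRingHom (σ : L →+* L) x)
    have h2 : ((RingOfIntegers.mapRingHom (σ : L →+* L) x : 𝓞 L) : L) = σ x := rfl
    rw [h2] at this
    simpa using this
  refine ⟨P.valuation L, ?_, ?_⟩
  · have : (q : L) = algebraMap (𝓞 L) L (q : 𝓞 L) := by simp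
    rw [this, P.valuation_of_algebraMap]
    exact P.intValuation_singleton hq0 rfl
  · intro σ x
    obtain ⟨a, b, hb, rfl⟩ := IsFractionRing.div_surjective (A := 𝓞 L) x
    rw [map_div₀, map_div₀, map_div₀, heq, heq]

lemma aux_dom {L : Type*} [Field L] {E : Type*} [CommRing E] [Algebra L E]
    (p : ℕ) (hp : p ≠ 0) (v : Valuation L (WithZero (Multiplicative ℤ))) (a : L)
    (ha : v a ≠ 0) (t : E) (κ : ℕ → (E →ₗ[L] L))
    (hκ : ∀ k < p, ∀ n, κ k (t ^ n) = if n % p = k then a ^ (n / p) else 0)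
    {ι : Type*} [Fintype ι] (c : ι → L) (n : ι → ℕ) (s₀ : ι) (h0 : c s₀ ≠ 0)
    (hs : ∀ s, s ≠ s₀ → v (c s) ^ p * v a ^ n s < v (c s₀) ^ p * v a ^ n s₀) :
    ∑ s, c s • t ^ n s ≠ 0 := by
  classical
  intro hz
  have hk : n s₀ % p < p := Nat.mod_lt _ (Nat.pos_of_ne_zero hp)
  have h1 := congrArg (κ (n s₀ % p)) hz
  simp only [map_sum, map_smul, map_zero, hκ _ hk, smul_eq_mul] at h1
  have hw : ∀ s, n s % p = n s₀ % p →
      v (c s * a ^ (n s / p)) ^ p * v a ^ (n s₀ % p) = v (c s) ^ p * v a ^ n s := by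
    intro s h
    conv_rhs => rw [← Nat.div_add_mod (n s) p, h]
    rw [map_mul, map_pow, mul_pow, pow_add, pow_mul, ← pow_mul, ← pow_mul, mul_comm p, mul_assoc]
  have ha0 : a ≠ 0 := by rintro rfl; simp at ha
  have hpos : v (c s₀ * a ^ (n s₀ / p)) ≠ 0 := by
    rw [Valuation.ne_zero_iff]
    exact mul_ne_zero h0 (pow_ne_zero _ ha0)
  have h2 := v.map_sum_eq_of_lt (s := Finset.univ) (j := s₀)
    (f := fun s => c s * if n s % p = n s₀ % p then a ^ (n s / p) else 0) (Finset.mem_univ _) 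
    (by
      intro s hss
      have hss : s ≠ s₀ := by simpa using hss
      simp only [if_true]
      split_ifs with h
      · have h3 := hs s hss
        rw [← hw s h, ← hw s₀ rfl] at h3
        exact lt_of_pow_lt_pow_left₀ p zero_le (lt_of_mul_lt_mul_right h3 zero_le)
      · rw [mul_zero, map_zero]
        exact zero_lt_iff.mpr hpos)
  rw [h1] at h2
  simp only [map_zero, if_true] at h2
  exact hpos h2.symm

lemma aux_lead {L : Type*} [Field L]
    (p : ℕ) (hp : p ≠ 0) (v : Valuation L (WithZero (Multiplicative ℤ))) (a : L)
    (ha : v a = WithZero.exp (-1 : ℤ)) (x : Fin p → L) (hx : x ≠ 0) :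
    ∃ i₀, x i₀ ≠ 0 ∧ ∀ i, i ≠ i₀ →
      v (x i) ^ p * v a ^ (i : ℕ) < v (x i₀) ^ p * v a ^ (i₀ : ℕ) := by
  obtain ⟨i₁, hi₁⟩ := Function.ne_iff.mp hx
  have : Nonempty (Fin p) := ⟨i₁⟩
  obtain ⟨i₀, hmax⟩ := Finite.exists_max (fun i : Fin p => v (x i) ^ p * v a ^ (i : ℕ))
  have ha0 : v a ≠ 0 := by rw [ha]; exact WithZero.exp_ne_zero
  have hne : x i₀ ≠ 0 := by
    intro h
    have h1 := hmax i₁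
    simp only [h, map_zero, zero_pow hp, zero_mul, le_zero_iff] at h1
    refine mul_ne_zero (pow_ne_zero _ ?_) (pow_ne_zero _ ha0) h1
    rw [Valuation.ne_zero_iff]; exact hi₁
  refine ⟨i₀, hne, fun i hi => lt_of_le_of_ne (hmax i) fun he => hi ?_⟩
  have hvi₀ : v (x i₀) ≠ 0 := (Valuation.ne_zero_iff _).mpr hne
  by_cases hvi : v (x i) = 0
  · rw [hvi, zero_pow hp, zero_mul] at he
    exact absurd he.symm (mul_ne_zero (pow_ne_zero _ hvi₀) (pow_ne_zero _ ha0))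
  rw [← WithZero.exp_log hvi, ← WithZero.exp_log hvi₀, ha, ← WithZero.exp_nsmul, ← WithZero.exp_nsmul, ← WithZero.exp_nsmul, ← WithZero.exp_nsmul, ← WithZero.exp_add, ← WithZero.exp_add,
    WithZero.exp_inj] at he
  simp only [nsmul_eq_mul] at he
  generalize WithZero.log (v (x i)) = m at he
  generalize WithZero.log (v (x i₀)) = m₀ at he
  have hd : (p : ℤ) ∣ (i : ℤ) - (i₀ : ℤ) := ⟨m - m₀, by linarith⟩
  have : (i : ℤ) - (i₀ : ℤ) = 0 := Int.eq_zero_of_abs_lt_dvd hd (by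
    have h1 := i.isLt
    have h2 := i₀.isLt
    rw [abs_lt]; constructor <;> omega)
  apply Fin.ext
  omega

end

/-- The cyclic algebra, realised inside `End_ℚ E`. -/
lemma aux_cyclic {L : Type} [Field L] [Algebra ℚ L] {E : Type} [CommRing E] [Algebra L E]
    [Algebra ℚ E] [IsScalarTower ℚ L E] [FiniteDimensional ℚ L] [IsGalois ℚ L]
    (p : ℕ) (hp : p.Prime) (hdim : Module.finrank ℚ L = p)
    (v : Valuation L (WithZero (Multiplicative ℤ))) (a : ℚ)
    (ha : v (algebraMap ℚ L a) = WithZero.exp (-1 : ℤ))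
    (t : E) (ht : t ^ p = algebraMap ℚ E a) (κ : ℕ → (E →ₗ[L] L))
    (hκ : ∀ k < p, ∀ n, κ k (t ^ n) = if n % p = k then (algebraMap ℚ L a) ^ (n / p) else 0)
    (σ : L ≃ₐ[ℚ] L) (hσ : ∀ g : L ≃ₐ[ℚ] L, g ∈ Subgroup.zpowers σ)
    (hvσ : ∀ x, v (σ x) = v x)
    (τ : E →ₐ[ℚ] E) (hτp : ∀ e, (τ^[p]) e = e) (hτt : τ t = t) (hτ : ∀ x, τ (algebraMap L E x) = algebraMap L E (σ x)) :
    ∃ D : DivisionAlgebraOverQ,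
      Subalgebra.center ℚ D.carrier = ⊥ ∧
      Module.finrank ℚ D.carrier = p ^ 2 ∧
      ∃ f : L →ₐ[ℚ] D.carrier, Function.Injective f ∧
        Module.finrank ℚ f.range = p := by
  classical
  have hp0 := hp.ne_zero
  have : NeZero p := ⟨hp0⟩
  have hva : v (algebraMap ℚ L a) ≠ 0 := by rw [ha]; exact WithZero.exp_ne_zero
  let lx : L →ₐ[ℚ] Module.End ℚ E := (Algebra.lmul ℚ E).comp (IsScalarTower.toAlgHom ℚ L E)
  let U : Module.End ℚ E := LinearMap.mulLeft ℚ t ∘ₗ τ.toLinearMap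
  have lx_apply : ∀ x e, lx x e = algebraMap L E x * e := fun x e => rfl
  have U_apply : ∀ e, U e = t * τ e := fun e => rfl
  have hτn : ∀ n : ℕ, (τ^[n]) t = t := fun n => Function.iterate_fixed hτt n
  have hτx : ∀ (n : ℕ) x, (τ^[n]) (algebraMap L E x) = algebraMap L E ((σ ^ n) x) := by
    intro n
    induction n with
    | zero => intro x; simp
    | succ n ih => 
      intro x
      rw [Function.iterate_succ_apply, hτ, ih, pow_succ]
      rfl
  have U_lx : ∀ x, U * lx x = lx (σ x) * U := by
    intro x
    ext e
    simp only [Module.End.mul_apply, lx_apply, U_apply, map_mul, hτ]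
    ring
  have Un_lx : ∀ (n : ℕ) x, U ^ n * lx x = lx ((σ ^ n) x) * U ^ n := by
    intro n
    induction n with
    | zero => intro x; simp
    | succ n ih =>
      intro x
      rw [pow_succ, mul_assoc, U_lx, ← mul_assoc, ih, mul_assoc, pow_succ σ]
      rfl
  have Un_one : ∀ n : ℕ, (U ^ n) 1 = t ^ n := by
    intro n
    induction n with
    | zero => simp
    | succ n ih => rw [pow_succ', Module.End.mul_apply, ih, U_apply, map_pow, hτt, pow_succ']
  have hσp : σ ^ p = 1 := by
    have : Nat.card (L ≃ₐ[ℚ] L) = p := by rw [IsGalois.card_aut_eq_finrank, hdim]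
    rw [← this]; exact pow_card_eq_one'
  have hordσ : orderOf σ = p := by
    have : Nat.card (L ≃ₐ[ℚ] L) = p := by rw [IsGalois.card_aut_eq_finrank, hdim]
    rw [← this]; exact orderOf_eq_card_of_forall_mem_zpowers hσ
  have Un_apply : ∀ (n : ℕ) e, (U ^ n) e = t ^ n * (τ^[n]) e := by
    intro n
    induction n with
    | zero => intro e; simp
    | succ n ih =>
      intro e
      rw [pow_succ', Module.End.mul_apply, ih, U_apply, map_mul, map_pow, hτt, pow_succ',
        Function.iterate_succ_apply', mul_assoc]
  have Up : U ^ p = lx (algebraMap ℚ L a) := by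
    ext e
    rw [Un_apply, hτp, ht, lx_apply, ← IsScalarTower.algebraMap_apply]
  let Φ : (Fin p → L) →ₗ[ℚ] Module.End ℚ E :=
    ∑ i : Fin p, (LinearMap.mulRight ℚ (U ^ (i : ℕ))) ∘ₗ lx.toLinearMap ∘ₗ LinearMap.proj i
  have Φ_apply : ∀ x, Φ x = ∑ i : Fin p, lx (x i) * U ^ (i : ℕ) := by
    intro x
    simp [Φ]
  have Φ_single : ∀ (i : Fin p) z, Φ (Pi.single i z) = lx z * U ^ (i : ℕ) := by
    intro i z
    rw [Φ_apply, Finset.sum_eq_single i]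
    · simp
    · intro j _ hj
      simp [Pi.single_eq_of_ne hj]
    · simp
  have hmem : ∀ z (n : ℕ), lx z * U ^ n ∈ LinearMap.range Φ := by
    intro z n
    refine ⟨Pi.single ⟨n % p, Nat.mod_lt _ hp.pos⟩ (z * (algebraMap ℚ L a) ^ (n / p)), ?_⟩
    rw [Φ_single, map_mul, map_pow, ← Up, mul_assoc, ← pow_mul, ← pow_add]
    simp only
    rw [Nat.div_add_mod]
  -- products of elements evaluated at `1`
  have Φ_one : ∀ x, (Φ x) 1 = ∑ i : Fin p, x i • t ^ (i : ℕ) := by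
    intro x
    rw [Φ_apply, LinearMap.sum_apply]
    refine Finset.sum_congr rfl fun i _ => ?_
    rw [Module.End.mul_apply, Un_one, lx_apply, Algebra.smul_def]
  have Φ_inj : Function.Injective Φ := by
    rw [injective_iff_map_eq_zero]
    intro x hx
    by_contra hne
    obtain ⟨i₀, h0, hi⟩ := aux_lead p hp0 v _ ha x hne
    refine aux_dom p hp0 v _ hva t κ hκ x (fun i => (i : ℕ)) i₀ h0 hi ?_
    rw [← Φ_one, hx, LinearMap.zero_apply]
  have mulform : ∀ x y, Φ x * Φ y = ∑ s : Fin p × Fin p,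
      lx (x s.1 * (σ ^ (s.1 : ℕ)) (y s.2)) * U ^ ((s.1 : ℕ) + (s.2 : ℕ)) := by
    intro x y
    rw [Φ_apply, Φ_apply, Finset.sum_mul_sum, Fintype.sum_prod_type]
    refine Finset.sum_congr rfl fun i _ => Finset.sum_congr rfl fun j _ => ?_
    rw [mul_assoc, ← mul_assoc (U ^ (i : ℕ)), Un_lx, map_mul, pow_add]
    simp only [mul_assoc]
  have hvσn : ∀ (n : ℕ) x, v ((σ ^ n) x) = v x := by
    intro n
    induction n with
    | zero => intro x; simp
    | succ n ih => intro x; rw [pow_succ', AlgEquiv.mul_apply, hvσ, ih]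
  have hdomain : ∀ x y, x ≠ 0 → y ≠ 0 → Φ x * Φ y ≠ 0 := by
    intro x y hx hy hxy
    obtain ⟨i₀, hi0, hi⟩ := aux_lead p hp0 v _ ha x hx
    obtain ⟨j₀, hj0, hj⟩ := aux_lead p hp0 v _ ha y hy
    refine aux_dom p hp0 v _ hva t κ hκ
      (fun s : Fin p × Fin p => x s.1 * (σ ^ (s.1 : ℕ)) (y s.2))
      (fun s => (s.1 : ℕ) + (s.2 : ℕ)) (i₀, j₀) ?_ ?_ ?_
    · exact mul_ne_zero hi0 ((map_ne_zero_iff _ (σ ^ (i₀ : ℕ)).injective).mpr hj0)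
    · rintro ⟨i, j⟩ hne
      have hform : ∀ i j : Fin p, v (x i * (σ ^ (i : ℕ)) (y j)) ^ p *
          v (algebraMap ℚ L a) ^ ((i : ℕ) + (j : ℕ)) =
          (v (x i) ^ p * v (algebraMap ℚ L a) ^ (i : ℕ)) *
          (v (y j) ^ p * v (algebraMap ℚ L a) ^ (j : ℕ)) := by
        intro i j
        rw [map_mul, hvσn, mul_pow, pow_add]
        exact mul_mul_mul_comm _ _ _ _
      have hpos1 : 0 < v (x i₀) ^ p * v (algebraMap ℚ L a) ^ (i₀ : ℕ) :=
        zero_lt_iff.mpr (mul_ne_zero (pow_ne_zero _ ((Valuation.ne_zero_iff _).mpr hi0))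
          (pow_ne_zero _ hva))
      have hpos2 : 0 < v (y j₀) ^ p * v (algebraMap ℚ L a) ^ (j₀ : ℕ) :=
        zero_lt_iff.mpr (mul_ne_zero (pow_ne_zero _ ((Valuation.ne_zero_iff _).mpr hj0))
          (pow_ne_zero _ hva))
      simp only [hform]
      by_cases h : i = i₀
      · subst h
        have hjj : j ≠ j₀ := fun h => hne (by rw [h])
        exact mul_lt_mul_of_pos_left (hj j hjj) hpos1
      · have h1 := hi i h
        have h2 : v (y j) ^ p * v (algebraMap ℚ L a) ^ (j : ℕ) ≤
            v (y j₀) ^ p * v (algebraMap ℚ L a) ^ (j₀ : ℕ) := by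
          by_cases h' : j = j₀
          · rw [h']
          · exact (hj j h').le
        exact lt_of_le_of_lt (mul_le_mul_of_nonneg_left h2 zero_le)
          (mul_lt_mul_of_pos_right h1 hpos2)
    · have := congrArg (fun f : Module.End ℚ E => f 1) (mulform x y)
      simp only [hxy, LinearMap.zero_apply, LinearMap.sum_apply] at this
      rw [this]
      refine Finset.sum_congr rfl fun s _ => ?_
      rw [Module.End.mul_apply, Un_one, lx_apply, Algebra.smul_def]
  let D : Subalgebra ℚ (Module.End ℚ E) := (LinearMap.range Φ).toSubalgebra
    (by simpa using hmem 1 0)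
    (by
      rintro _ _ ⟨x, rfl⟩ ⟨y, rfl⟩
      rw [mulform]
      exact Submodule.sum_mem _ fun s _ => hmem _ _)
  have hD : ∀ d, d ∈ D ↔ ∃ x, Φ x = d := fun d => Iff.rfl
  let eD : (Fin p → L) ≃ₗ[ℚ] D := LinearEquiv.ofInjective Φ Φ_inj
  have hfin : FiniteDimensional ℚ D := Module.Finite.equiv eD
  have hrank : Module.finrank ℚ D = p ^ 2 := by
    rw [← eD.finrank_eq, Module.finrank_pi_fintype]
    simp [hdim, sq]
  have hnt : Nontrivial D := by
    apply Module.nontrivial_of_finrank_pos (R := ℚ)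
    rw [hrank]; exact pow_pos hp.pos _
  have hnzd : NoZeroDivisors D := by
    refine ⟨?_⟩
    rintro ⟨_, ⟨x, rfl⟩⟩ ⟨_, ⟨y, rfl⟩⟩ hxy
    by_contra hcon
    push Not at hcon
    refine hdomain x y ?_ ?_ (congrArg Subtype.val hxy)
    · rintro rfl; exact hcon.1 (Subtype.ext (map_zero Φ))
    · rintro rfl; exact hcon.2 (Subtype.ext (map_zero Φ))
  have hdom : IsDomain D := NoZeroDivisors.to_isDomain D
  have hlxD : ∀ x, lx x ∈ D := fun x => by
    have := hmem x 0
    rwa [pow_zero, mul_one] at this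
  let f : L →ₐ[ℚ] D := lx.codRestrict D hlxD
  have hf : Function.Injective f := f.toRingHom.injective
  have hcenter : Subalgebra.center ℚ D = ⊥ := by
    rw [eq_bot_iff]
    rintro ⟨_, ⟨x, rfl⟩⟩ hz
    rw [Subalgebra.mem_center_iff] at hz
    have h1 : ∀ (l : L) (i : Fin p), l * x i = x i * (σ ^ (i : ℕ)) l := by
      intro l
      have h : lx l * Φ x = Φ x * lx l := congrArg Subtype.val (hz ⟨lx l, hlxD l⟩)
      have e1 : lx l * Φ x = Φ (fun i => l * x i) := by
        rw [Φ_apply, Φ_apply, Finset.mul_sum]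
        refine Finset.sum_congr rfl fun i _ => ?_
        rw [map_mul, mul_assoc]
      have e2 : Φ x * lx l = Φ (fun i => x i * (σ ^ (i : ℕ)) l) := by
        rw [Φ_apply, Φ_apply, Finset.sum_mul]
        refine Finset.sum_congr rfl fun i _ => ?_
        rw [mul_assoc, Un_lx, map_mul, mul_assoc]
      rw [e1, e2] at h
      exact fun i => congrFun (Φ_inj h) i
    have h2 : ∀ i : Fin p, i ≠ 0 → x i = 0 := by
      intro i hi
      by_contra hxi
      have h3 : σ ^ (i : ℕ) = 1 := by
        ext l
        have := h1 l i
        rw [mul_comm] at this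
        exact (mul_left_cancel₀ hxi this).symm
      have h4 := orderOf_dvd_of_pow_eq_one h3
      rw [hordσ] at h4
      exact hi (Fin.ext (Nat.eq_zero_of_dvd_of_lt h4 i.isLt))
    have h3 : x = Pi.single 0 (x 0) := by
      ext i
      by_cases hi : i = 0
      · subst hi; simp
      · rw [h2 i hi, Pi.single_eq_of_ne hi]
    have h4 : Φ x = lx (x 0) := by
      rw [h3, Φ_single]; simp
    have hUD : U ∈ D := by
      have := hmem 1 1
      rwa [pow_one, map_one, one_mul] at this
    have h5 : σ (x 0) = x 0 := by
      have h : U * Φ x = Φ x * U := congrArg Subtype.val (hz ⟨U, hUD⟩)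
      rw [h4, U_lx] at h
      have e : ∀ z, lx z * U = Φ (Pi.single ⟨1, hp.one_lt⟩ z) := by
        intro z; rw [Φ_single, pow_one]
      rw [e, e] at h
      exact Pi.single_injective _ (Φ_inj h)
    have h6 : x 0 ∈ (⊥ : IntermediateField ℚ L) := by
      rw [IsGalois.mem_bot_iff_fixed]
      intro g
      have hle : Subgroup.zpowers σ ≤ MulAction.stabilizer (L ≃ₐ[ℚ] L) (x 0) := by
        rw [Subgroup.zpowers_le]; exact h5
      exact hle (hσ g)
    obtain ⟨r, hr⟩ := IntermediateField.mem_bot.mp h6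
    rw [Algebra.mem_bot]
    refine ⟨r, Subtype.ext ?_⟩
    change algebraMap ℚ (Module.End ℚ E) r = Φ x
    rw [h4, ← hr, AlgHom.commutes]
  refine ⟨@DivisionAlgebraOverQ.mk D (divisionRingOfFiniteDimensional ℚ D) D.algebra,
    hcenter, hrank, f, hf, ?_⟩
  rw [← hdim]
  exact (AlgEquiv.ofInjective f hf).toLinearEquiv.finrank_eq.symm

lemma aux_final (p : ℕ) (hp : p.Prime) (L : Type) [Field L] [Algebra ℚ L] [IsGalois ℚ L]
    (hdim : Module.finrank ℚ L = p) [FiniteDimensional ℚ L]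
    (σ : L ≃ₐ[ℚ] L) (hσ : ∀ g : L ≃ₐ[ℚ] L, g ∈ Subgroup.zpowers σ)
    (v : Valuation L (WithZero (Multiplicative ℤ))) (q : ℕ)
    (hq : v (q : L) = WithZero.exp (-1 : ℤ)) (hvσ : ∀ x, v (σ x) = v x) :
    ∃ D : DivisionAlgebraOverQ,
      Subalgebra.center ℚ D.carrier = ⊥ ∧
      Module.finrank ℚ D.carrier = p ^ 2 ∧
      ∃ f : L →ₐ[ℚ] D.carrier, Function.Injective f ∧
        Module.finrank ℚ f.range = p := by
  classical
  have hcard : Nat.card (L ≃ₐ[ℚ] L) = p := by rw [IsGalois.card_aut_eq_finrank, hdim]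
  have hσp : σ ^ p = 1 := by rw [← hcard]; exact pow_card_eq_one'
  let P : Polynomial L := Polynomial.X ^ p - Polynomial.C (q : L)
  have hPdeg : P.natDegree = p := Polynomial.natDegree_X_pow_sub_C
  have hPm : P.Monic := Polynomial.monic_X_pow_sub_C _ hp.ne_zero
  have hP0 : P ≠ 0 := hPm.ne_zero
  let E := AdjoinRoot P
  let t : E := AdjoinRoot.root P
  have ht : t ^ p = algebraMap L E (q : L) := by
    have h := AdjoinRoot.eval₂_root P
    simp only [P, Polynomial.eval₂_sub, Polynomial.eval₂_X_pow, Polynomial.eval₂_C] at h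
    exact sub_eq_zero.mp h
  let B := AdjoinRoot.powerBasis hP0
  have hBdim : B.dim = p := hPdeg
  have hBgen : B.gen = t := rfl
  let κ : ℕ → (E →ₗ[L] L) := fun k => if h : k < p then B.basis.coord ⟨k, h.trans_eq hBdim.symm⟩ else 0
  have hκ : ∀ k < p, ∀ n, κ k (t ^ n) =
      if n % p = k then (algebraMap ℚ L (q : ℚ)) ^ (n / p) else 0 := by
    intro k hk n
    have h1 : t ^ n = (q : L) ^ (n / p) • B.basis ⟨n % p, (Nat.mod_lt _ hp.pos).trans_eq hBdim.symm⟩ := by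
      rw [B.basis_eq_pow, hBgen, Algebra.smul_def, map_pow, ← ht, ← pow_mul, ← pow_add]
      simp only
      rw [Nat.div_add_mod]
    rw [h1]
    simp only [κ, hk, dif_pos, map_smul, Module.Basis.coord_apply, Module.Basis.repr_self,
      Finsupp.single_apply, Fin.mk.injEq, smul_eq_mul, map_natCast]
    split_ifs <;> simp
  have hdvd : P ∣ P.map (σ : L →+* L) := by simp [P]
  let τ0 : E →+* E := AdjoinRoot.map (σ : L →+* L) P P hdvd
  let τ : E →ₐ[ℚ] E := τ0.toRatAlgHom
  have hτt : τ t = t := by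
    change AdjoinRoot.map (σ : L →+* L) P P hdvd (AdjoinRoot.root P) = _
    simp [t]
  have hτ : ∀ x, τ (algebraMap L E x) = algebraMap L E (σ x) := by
    intro x
    change AdjoinRoot.map (σ : L →+* L) P P hdvd (AdjoinRoot.of P x) = _
    simp
    rfl
  have hτx : ∀ (n : ℕ) x, (τ^[n]) (algebraMap L E x) = algebraMap L E ((σ ^ n) x) := by
    intro n
    induction n with
    | zero => intro x; simp
    | succ n ih => 
      intro x
      rw [Function.iterate_succ_apply, hτ, ih, pow_succ]
      rfl
  have hτn : ∀ n : ℕ, (τ^[n]) t = t := fun n => Function.iterate_fixed hτt n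
  have hτp : ∀ e, (τ^[p]) e = e := by
    intro e
    rw [← AlgHom.coe_pow]
    rw [← B.basis.sum_repr e, map_sum]
    refine Finset.sum_congr rfl fun i _ => ?_
    rw [Algebra.smul_def, map_mul, AlgHom.coe_pow, hτx, hσp, B.basis_eq_pow, hBgen,
      ← AlgHom.coe_pow, map_pow, AlgHom.coe_pow, hτn]
    rfl
  exact aux_cyclic (E := E) p hp hdim v (q : ℚ) (by simpa using hq) t
    (by rw [ht]; simp) κ hκ σ hσ hvσ τ hτp hτt hτ

/-- Let `p` be a prime and `L/ℚ` a cyclic Galois extension of degree `p`.  Then there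
is a central division algebra `D` over `ℚ` of degree `p` (center equal to `ℚ` and
`dim_ℚ D = p²`) together with a `ℚ`-algebra embedding of `L` into `D`, whose image is a
maximal subfield of `D` (of dimension `p` over `ℚ`). -/
theorem exists_central_division_algebra_with_maximal_subfield
    (p : ℕ) (hp : p.Prime) (L : Type) [Field L] [Algebra ℚ L] [IsGalois ℚ L]
    (hdim : Module.finrank ℚ L = p) (hcyc : IsCyclic (L ≃ₐ[ℚ] L)) :
    ∃ D : DivisionAlgebraOverQ,
      Subalgebra.center ℚ D.carrier = ⊥ ∧
      Module.finrank ℚ D.carrier = p ^ 2 ∧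
      ∃ f : L →ₐ[ℚ] D.carrier, Function.Injective f ∧
        Module.finrank ℚ f.range = p := by
  have hcz : CharZero L := algebraRat.charZero L
  obtain rfl : ‹Algebra ℚ L› = DivisionRing.toRatAlgebra := Subsingleton.elim _ _
  have hfd : FiniteDimensional ℚ L := Module.finite_of_finrank_pos (hdim ▸ hp.pos)
  have hnf : NumberField L := { to_charZero := hcz, to_finiteDimensional := hfd }
  obtain ⟨q, hq, hP⟩ := aux_exists_inert p hp L hdim
  obtain ⟨v, hv, hvσ⟩ := aux_val L q hq hP
  obtain ⟨σ, hσ⟩ := hcyc.exists_generator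
  exact aux_final p hp L hdim σ hσ v q hv (hvσ σ)
end

section
/- (Theorem: embedding criterion.) Let F be a field, K/F a finite field extension of degree b, D a division ring with center K of degree a (dim_K D = a²), regarded as an F-algebra via F ⊆ K ⊆ D, and E a division ring with center F of degree N = nab (dim_F E = N²) for some positive integer n. Then D is isomorphic to an F-subalgebra of E (i.e., there exists an injective F-algebra homomorphism D → E) if and only if the central simple K-algebra (E ⊗_F K) ⊗_K Dᵒᵖ is Brauer-equivalent over K to some central simple K-algebra of degree n (i.e., of K-dimension n²). -/
open scoped TensorProduct

/-- A bundled (associative unital) algebra over a field `K`. -/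
structure BundledAlgebra (K : Type) [Field K] : Type 1 where
  carrier : Type
  [ring : Ring carrier]
  [algebra : Algebra K carrier]

attribute [instance] BundledAlgebra.ring
attribute [instance] BundledAlgebra.algebra


section EmbedAux

variable {k : Type*} [Field k] {B C : Type*} [Ring B] [Algebra k B] [Ring C] [Algebra k C]
  {ι : Type*} [DecidableEq ι] (β : Module.Basis ι k B)

open TensorProduct

theorem aux_coord_mul_right (x : B ⊗[k] C) (c : C) (i : ι) :
    equivFinsuppOfBasisLeft β (x * (1 ⊗ₜ c)) i = equivFinsuppOfBasisLeft β x i * c := by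
  induction x using TensorProduct.induction_on with
  | zero => simp
  | tmul b c' =>
    simp [Algebra.TensorProduct.tmul_mul_tmul]
  | add x y hx hy => simp [add_mul, hx, hy]

theorem aux_coord_mul_left (x : B ⊗[k] C) (c : C) (i : ι) :
    equivFinsuppOfBasisLeft β ((1 ⊗ₜ c) * x) i = c * equivFinsuppOfBasisLeft β x i := by
  induction x using TensorProduct.induction_on with
  | zero => simp
  | tmul b c' =>
    simp [Algebra.TensorProduct.tmul_mul_tmul]
  | add x y hx hy => simp [mul_add, hx, hy]

theorem aux_exists_left (hC : Algebra.IsCentral k C) (x : B ⊗[k] C)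
    (hx : ∀ c : C, x * (1 ⊗ₜ c) = (1 ⊗ₜ c) * x) : ∃ b : B, x = b ⊗ₜ 1 := by
  classical
  let β := Module.Basis.ofVectorSpace k B
  have h1 : ∀ i, ∃ a : k, equivFinsuppOfBasisLeft β x i = algebraMap k C a := by
    intro i
    rw [← Algebra.IsCentral.mem_center_iff, Subalgebra.mem_center_iff]
    intro c
    rw [← aux_coord_mul_left, ← hx, aux_coord_mul_right]
  choose a ha using h1
  refine ⟨∑ i ∈ (equivFinsuppOfBasisLeft β x).support, a i • β i, ?_⟩
  conv_lhs => rw [← (equivFinsuppOfBasisLeft β).symm_apply_apply x,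
    equivFinsuppOfBasisLeft_symm_apply]
  rw [Finsupp.sum, TensorProduct.sum_tmul]
  refine Finset.sum_congr rfl fun i _ => ?_
  rw [ha, Algebra.algebraMap_eq_smul_one, TensorProduct.smul_tmul]

theorem aux_left_injective [Nontrivial C] {b b' : B}
    (h : (b ⊗ₜ 1 : B ⊗[k] C) = b' ⊗ₜ 1) : b = b' :=
  Algebra.TensorProduct.includeLeft_injective (S := k) (R := k) (A := B) (B := C)
    (FaithfulSMul.algebraMap_injective k C) h

theorem aux_central_tensor [Nontrivial C] (hB : Algebra.IsCentral k B)
    (hC : Algebra.IsCentral k C) : Algebra.IsCentral k (B ⊗[k] C) where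
  out x hx := by
    rw [Subalgebra.mem_center_iff] at hx
    obtain ⟨b, rfl⟩ := aux_exists_left hC x fun c => (hx _).symm
    have hb : b ∈ Subalgebra.center k B := by
      rw [Subalgebra.mem_center_iff]
      intro b'
      have := hx (b' ⊗ₜ 1)
      simp only [Algebra.TensorProduct.tmul_mul_tmul, mul_one] at this
      exact aux_left_injective this
    obtain ⟨a, rfl⟩ := (Algebra.IsCentral.mem_center_iff k).1 hb
    exact Algebra.mem_bot.2 ⟨a, rfl⟩

theorem aux_central_baseChange {K : Type*} [Field K] [Algebra k K]
    (hC : Algebra.IsCentral k C) : Algebra.IsCentral K (K ⊗[k] C) where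
  out x hx := by
    rw [Subalgebra.mem_center_iff] at hx
    obtain ⟨b, rfl⟩ := aux_exists_left hC x fun c => (hx _).symm
    exact Algebra.mem_bot.2 ⟨b, rfl⟩

theorem aux_simple_tensor {k : Type*} [Field k] {B C : Type*} [Ring B] [Algebra k B]
    [DivisionRing C] [Algebra k C] [IsSimpleRing B]
    (hC : Algebra.IsCentral k C) : IsSimpleRing (B ⊗[k] C) := by
  classical
  let β := Module.Basis.ofVectorSpace k B
  let Φ := equivFinsuppOfBasisLeft (N := C) β
  refine .of_eq_bot_or_eq_top fun I => ?_
  rw [or_iff_not_imp_left, ← I.one_mem_iff]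
  intro hI
  have hex : ∃ n : ℕ, ∃ x ∈ I, x ≠ 0 ∧ (Φ x).support.card = n := by
    obtain ⟨x, hx1, hx2 : x ≠ 0⟩ := SetLike.exists_of_lt (bot_lt_iff_ne_bot.mpr hI : ⊥ < I)
    exact ⟨_, x, hx1, hx2, rfl⟩
  obtain ⟨x, hxI, hx0, hcard⟩ := Nat.find_spec hex
  have hmin := fun m => Nat.find_min hex (m := m)
  rw [← hcard] at hmin
  have hΦ : Φ x ≠ 0 := by simpa using hx0
  obtain ⟨i, hi⟩ := Finsupp.ne_iff.1 hΦ
  simp only [Finsupp.coe_zero, Pi.zero_apply] at hi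
  set y := x * (1 ⊗ₜ (Φ x i)⁻¹) with hy
  have hyc : ∀ j, Φ y j = Φ x j * (Φ x i)⁻¹ := fun j => aux_coord_mul_right β x _ j
  have hyI : y ∈ I := I.mul_mem_right _ _ hxI
  have hyi : Φ y i = 1 := by rw [hyc, mul_inv_cancel₀ hi]
  have hcomm : ∀ c : C, y * (1 ⊗ₜ c) = (1 ⊗ₜ c) * y := by
    intro c
    by_contra hne
    have hz : ∀ j, Φ (y * (1 ⊗ₜ c) - (1 ⊗ₜ c) * y) j = Φ y j * c - c * Φ y j := by
      intro j
      rw [map_sub, Finsupp.sub_apply]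
      exact congrArg₂ _ (aux_coord_mul_right β y _ j) (aux_coord_mul_left β y _ j)
    refine hmin _ ?_ ⟨_, I.sub_mem (I.mul_mem_right _ (1 ⊗ₜ c) hyI)
      (I.mul_mem_left (1 ⊗ₜ c) _ hyI), sub_ne_zero.2 hne, rfl⟩
    refine Finset.card_lt_card (Finset.ssubset_iff_of_subset ?_ |>.2 ⟨i, by simpa using hi, ?_⟩)
    · intro j
      rw [Finsupp.mem_support_iff, Finsupp.mem_support_iff, hz, hyc]
      intro h h0
      simp [h0] at h
    · simp [-map_sub, hz, hyi]
  obtain ⟨b, hb⟩ := aux_exists_left hC y hcomm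
  have hb0 : b ≠ 0 := by
    rintro rfl
    rw [hb] at hyi
    simp at hyi
  have := IsSimpleRing.one_mem_of_ne_zero_mem
    (I.comap (Algebra.TensorProduct.includeLeft : B →ₐ[k] B ⊗[k] C)) hb0
    (by rw [TwoSidedIdeal.mem_comap]; simpa [← hb] using hyI)
  rw [TwoSidedIdeal.mem_comap, map_one] at this
  exact this

theorem aux_matrix {K R V : Type*} [Field K] [Ring R] [Algebra K R] [AddCommGroup V] [Module K V]
    [FiniteDimensional K V]
    {m : ℕ} (hm : 0 < m)
    (φ : Matrix (Fin m) (Fin m) R →ₐ[K] Module.End K V) :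
    ∃ (W : Submodule K V) (_ : R →ₐ[K] Module.End K W),
      Module.finrank K V = m * Module.finrank K W := by
  classical
  let o : Fin m := ⟨0, hm⟩
  let W : Submodule K V := LinearMap.range (φ (Matrix.single o o 1))
  have hW : ∀ w : V, w ∈ W ↔ φ (Matrix.single o o 1) w = w := by
    intro w
    constructor
    · rintro ⟨v, rfl⟩
      rw [← Module.End.mul_apply, ← map_mul]
      simp
    · intro h
      exact ⟨w, h⟩
  have hinv : ∀ r : R, ∀ w ∈ W, φ (Matrix.scalarAlgHom (Fin m) K r) w ∈ W := by
    intro r w hw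
    rw [hW] at hw ⊢
    conv_rhs => rw [← hw]
    rw [← Module.End.mul_apply, ← Module.End.mul_apply, ← map_mul, ← map_mul]
    congr 2
    ext i j
    simp [Matrix.single]
  let ψ : R →ₐ[K] Module.End K W :=
    AlgHom.ofLinearMap
      { toFun := fun r => (φ (Matrix.scalarAlgHom (Fin m) K r)).restrict (hinv r)
        map_add' := by
          intro r s; ext w; simp only [map_add]; rfl
        map_smul' := by
          intro r s; ext w; simp only [map_smul]; rfl }
      (by ext w; change φ (Matrix.scalarAlgHom (Fin m) K 1) w = w; simp only [map_one]; rfl)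
      (by
        intro r s; ext w
        change φ (Matrix.scalarAlgHom (Fin m) K (r * s)) w = φ (Matrix.scalarAlgHom (Fin m) K r)
          (φ (Matrix.scalarAlgHom (Fin m) K s) w)
        simp only [map_mul]; rfl)
  refine ⟨W, ψ, ?_⟩
  have e : V ≃ₗ[K] (Fin m → W) := LinearEquiv.ofLinearMap
    (LinearMap.pi fun i => (φ (Matrix.single o i 1)).codRestrict W (by
      intro v
      rw [hW, ← Module.End.mul_apply, ← map_mul]
      simp))
    (∑ i, φ (Matrix.single i o 1) ∘ₗ W.subtype ∘ₗ LinearMap.proj i)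
    (by
      refine LinearMap.ext fun w => funext fun i => Subtype.ext ?_
      simp only [LinearMap.comp_apply, LinearMap.sum_apply, LinearMap.pi_apply,
        map_sum, LinearMap.proj_apply, Submodule.subtype_apply,
        LinearMap.id_apply]
      rw [Finset.sum_eq_single i]
      · rw [LinearMap.codRestrict_apply, ← Module.End.mul_apply, ← map_mul]
        simpa using (hW _).1 (w i).2
      · intro j _ hj
        apply Subtype.ext
        rw [LinearMap.codRestrict_apply, ← Module.End.mul_apply, ← map_mul, Matrix.single_mul_single_of_ne _ _ _ _ hj.symm]
        simp
      · simp)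
    (by
      refine LinearMap.ext fun v => ?_
      simp only [LinearMap.comp_apply, LinearMap.sum_apply, LinearMap.pi_apply,
        LinearMap.codRestrict_apply, LinearMap.proj_apply, Submodule.subtype_apply,
        LinearMap.id_apply]
      simp only [← Module.End.mul_apply, ← map_mul, Matrix.single_mul_single_same, mul_one]
      rw [← LinearMap.sum_apply, ← map_sum]
      have : ∑ i : Fin m, Matrix.single i i (1 : R) = 1 := by
        ext i j
        rw [Matrix.sum_apply]
        by_cases h : i = j
        · subst h
          simp [Matrix.single]
        · rw [Matrix.one_apply_ne h]
          refine Finset.sum_eq_zero fun l _ => ?_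
          simp only [Matrix.single, Matrix.of_apply]
          rw [if_neg]
          rintro ⟨rfl, rfl⟩
          exact h rfl
      rw [this]; simp)
  rw [e.finrank_eq, Module.finrank_pi_fintype]
  simp

end EmbedAux

theorem aux_to_module
    (F K : Type) [Field F] [Field K] [Algebra F K] [FiniteDimensional F K]
    (D : Type) [DivisionRing D] [Algebra K D]
    [Algebra F D] [IsScalarTower F K D]
    (E : Type) [DivisionRing E] [Algebra F E] [FiniteDimensional F E] (f : D →ₐ[F] E) :
    ∃ (V : Type) (_ : AddCommGroup V) (_ : Module K V) (_ : FiniteDimensional K V)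
      (_ : ((K ⊗[F] E) ⊗[K] Dᵐᵒᵖ) →ₐ[K] Module.End K V),
      Module.finrank F K * Module.finrank K V = Module.finrank F E := by
  let g : K →+* Eᵐᵒᵖ := ((f : D →+* E).comp (algebraMap K D)).toOpposite
    (fun x y => by
      have := (Commute.all x y).map ((f : D →+* E).comp (algebraMap K D))
      exact this)
  let mod : Module K E := Module.compHom E g
  have smul_def : ∀ (k : K) (x : E), k • x = x * f (algebraMap K D k) := fun k x => rfl
  have : IsScalarTower F K E := ⟨fun c k x => by
    rw [smul_def, smul_def, Algebra.smul_def c k, map_mul, map_mul,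
      ← IsScalarTower.algebraMap_apply, AlgHom.commutes, Algebra.smul_def, ← mul_assoc, ← mul_assoc,
      Algebra.commutes c x]⟩
  have : SMulCommClass K F E := ⟨fun k c x => by
    rw [smul_def, smul_def, smul_mul_assoc]⟩
  let L : E →ₐ[F] Module.End K E := AlgHom.ofLinearMap
    { toFun := fun e =>
        { toFun := fun x => e * x
          map_add' := mul_add e
          map_smul' := fun k x => by simp only [smul_def, mul_assoc, RingHom.id_apply] }
      map_add' := fun e e' => by ext x; exact add_mul e e' x
      map_smul' := fun c e => by ext x; exact smul_mul_assoc c e x }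
    (by ext x; exact one_mul x) (fun e e' => by ext x; exact mul_assoc e e' x)
  let R : Dᵐᵒᵖ →ₐ[K] Module.End K E := AlgHom.ofLinearMap
    { toFun := fun d =>
        { toFun := fun x => x * f d.unop
          map_add' := fun x y => add_mul x y _
          map_smul' := fun k x => by
            simp only [smul_def, mul_assoc, RingHom.id_apply, ← map_mul, Algebra.commutes k] }
      map_add' := fun e e' => by
        ext x
        change x * f (e.unop + e'.unop) = x * f e.unop + x * f e'.unop
        rw [map_add, mul_add]
      map_smul' := fun c e => by
        ext x
        change x * f (c • e.unop) = c • (x * f e.unop)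
        rw [smul_def, Algebra.smul_def, Algebra.commutes, map_mul, mul_assoc] }
    (by ext x; change x * f 1 = x; simp)
    (fun e e' => by
      ext x
      change x * f (e'.unop * e.unop) = (x * f e'.unop) * f e.unop
      rw [map_mul, mul_assoc])
  have hLR : ∀ e d, Commute (L e) (R d) := fun e d => by
    ext x
    exact (mul_assoc e x (f d.unop)).symm
  let P : K ⊗[F] E →ₐ[K] Module.End K E :=
    Algebra.TensorProduct.lift (Algebra.ofId K _) L (fun k e => Algebra.commutes k _)
  have hPR : ∀ t d, Commute (P t) (R d) := by
    intro t d
    induction t using TensorProduct.induction_on with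
    | zero => simp
    | tmul k e =>
      simp only [P, Algebra.TensorProduct.lift_tmul]
      exact Commute.mul_left (Algebra.commutes k _) (hLR e d)
    | add x y hx hy => rw [map_add]; exact hx.add_left hy
  exact ⟨E, inferInstance, mod, FiniteDimensional.right F K E,
    Algebra.TensorProduct.lift P R hPR, Module.finrank_mul_finrank F K E⟩

theorem aux_of_module
    (F K : Type) [Field F] [Field K] [Algebra F K] [FiniteDimensional F K]
    (D : Type) [DivisionRing D] [Algebra K D]
    [Algebra F D] [IsScalarTower F K D]
    (E : Type) [DivisionRing E] [Algebra F E] [FiniteDimensional F E]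
    (V : Type) [AddCommGroup V] [Module K V] [FiniteDimensional K V]
    (φ : ((K ⊗[F] E) ⊗[K] Dᵐᵒᵖ) →ₐ[K] Module.End K V)
    (hdim : Module.finrank F K * Module.finrank K V = Module.finrank F E) :
    ∃ f : D →ₐ[F] E, Function.Injective f := by
  let : Module F V := Module.compHom V (algebraMap F K)
  have : IsScalarTower F K V := IsScalarTower.of_algebraMap_smul fun _ _ => rfl
  let L : E →ₐ[F] Module.End K V :=
    (φ.restrictScalars F).comp ((Algebra.TensorProduct.includeLeft (R := K) (S := K)
      (A := K ⊗[F] E) (B := Dᵐᵒᵖ)).restrictScalars F |>.comp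
        (Algebra.TensorProduct.includeRight (R := F) (A := K) (B := E)))
  let R : Dᵐᵒᵖ →ₐ[K] Module.End K V := φ.comp Algebra.TensorProduct.includeRight
  have hLR : ∀ e d v, L e (R d v) = R d (L e v) := by
    intro e d v
    rw [← Module.End.mul_apply, ← Module.End.mul_apply]
    congr 1
    simp only [L, R, AlgHom.comp_apply, AlgHom.restrictScalars_apply, ← map_mul]
    simp
  let : Module E V := Module.compHom V (L : E →+* Module.End K V)
  have smul_def : ∀ (e : E) (v : V), e • v = L e v := fun _ _ => rfl
  have : IsScalarTower F E V := IsScalarTower.of_algebraMap_smul fun c v => by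
    rw [smul_def, AlgHom.commutes]; rfl
  have h1 := Module.finrank_mul_finrank F K V
  have h2 := Module.finrank_mul_finrank F E V
  have hpos : 0 < Module.finrank F E := Module.finrank_pos
  have hone : Module.finrank E V = 1 := by
    rw [← h1, hdim] at h2
    exact Nat.eq_of_mul_eq_mul_left hpos (by rw [h2, mul_one])
  obtain ⟨w, hw0, hw⟩ := finrank_eq_one_iff'.1 hone
  have hinj : ∀ e e' : E, e • w = e' • w → e = e' := fun e e' h => smul_left_injective E hw0 h
  choose g hg using fun d : D => hw (R (MulOpposite.op d) w)
  let f : D →ₐ[F] E :=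
    { toFun := g
      map_one' := hinj _ _ (by rw [hg]; simp)
      map_mul' := fun d d' => hinj _ _ (by
        rw [hg, mul_smul, hg, smul_def, hLR, ← smul_def, hg, MulOpposite.op_mul, map_mul]; rfl)
      map_zero' := hinj _ _ (by rw [hg]; simp)
      map_add' := fun d d' => hinj _ _ (by rw [hg, add_smul, hg, hg]; simp)
      commutes' := fun c => hinj _ _ (by
        rw [hg, algebraMap_smul, IsScalarTower.algebraMap_apply F K D]
        have := R.commutes (algebraMap F K c)
        rw [MulOpposite.algebraMap_apply] at this
        rw [this]; rfl) }
  exact ⟨f, f.toRingHom.injective⟩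

theorem aux_main_s5 (K A : Type) [Field K] [Ring A] [Algebra K A] [FiniteDimensional K A]
    [IsSimpleRing A] [hA : Algebra.IsCentral K A] (n q : ℕ) (hn : 0 < n) (hq : 0 < q)
    (hdim : Module.finrank K A = (n * q) ^ 2) :
    (∃ (V : Type) (_ : AddCommGroup V) (_ : Module K V) (_ : FiniteDimensional K V)
      (_ : A →ₐ[K] Module.End K V), Module.finrank K V = n ^ 2 * q) ↔
    ∃ (B : Type) (_ : Ring B) (_ : Algebra K B), Algebra.IsCentral K B ∧ IsSimpleRing B ∧
        Module.finrank K B = n ^ 2 ∧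
        ∃ m l : ℕ, 0 < m ∧ 0 < l ∧
          Nonempty (Matrix (Fin m) (Fin m) A ≃ₐ[K] Matrix (Fin l) (Fin l) B) := by
  constructor
  · rintro ⟨V, _, _, _, φ, hV⟩
    have : IsArtinianRing A := IsArtinianRing.of_finite K A
    obtain ⟨r, hr, Δ, _, _, _, ⟨e⟩⟩ := IsSimpleRing.exists_algEquiv_matrix_divisionRing_finite K A
    have hr0 : 0 < r := Nat.pos_of_ne_zero hr.out
    obtain ⟨W, ψ, hW⟩ := aux_matrix hr0 (φ.comp e.symm.toAlgHom)
    let : Module Δ W := Module.compHom W (ψ : Δ →+* Module.End K W)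
    have : IsScalarTower K Δ W := IsScalarTower.of_algebraMap_smul fun c v => by
      change ψ (algebraMap K Δ c) v = _
      rw [AlgHom.commutes]; rfl
    have h2 := Module.finrank_mul_finrank K Δ W
    set t := Module.finrank Δ W
    set δ := Module.finrank K Δ
    have hAd : r * r * δ = (n * q) ^ 2 := by
      rw [← hdim, e.toLinearEquiv.finrank_eq, Module.finrank_matrix]; simp [δ]
    have hVd : r * (δ * t) = n ^ 2 * q := by rw [h2, ← hW, hV]
    have ht : 0 < t := by
      rcases Nat.eq_zero_or_pos t with h | h
      · rw [h] at hVd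
        have : 0 < n ^ 2 * q := by positivity
        omega
      · exact h
    have htd : t * t * δ = n ^ 2 := by
      have : 0 < (n * q) ^ 2 := by positivity
      refine Nat.eq_of_mul_eq_mul_left this ?_
      calc (n * q) ^ 2 * (t * t * δ) = (r * (δ * t)) ^ 2 := by rw [← hAd]; ring
        _ = (n * q) ^ 2 * n ^ 2 := by rw [hVd]; ring
    have : NeZero t := ⟨ht.ne'⟩
    have : Algebra.IsCentral K Δ := by
      have := Algebra.IsCentral.of_algEquiv K _ _ e
      constructor
      intro x hx
      have h3 : Matrix.scalarAlgHom (Fin r) K x ∈ Subalgebra.center K (Matrix (Fin r) (Fin r) Δ) := by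
        rw [Matrix.subalgebraCenter_eq_scalarAlgHom_map]
        exact Subalgebra.mem_map.2 ⟨x, hx, rfl⟩
      obtain ⟨a, ha⟩ := (Algebra.IsCentral.mem_center_iff K).1 h3
      have := congrFun (congrFun ha ⟨0, hr0⟩) ⟨0, hr0⟩
      simp [Matrix.algebraMap_matrix_apply] at this
      exact Algebra.mem_bot.2 ⟨a, this.symm⟩
    refine ⟨Matrix (Fin t) (Fin t) Δ, inferInstance, inferInstance, inferInstance, inferInstance,
      ?_, t, r, ht, hr0, ⟨?_⟩⟩
    · rw [Module.finrank_matrix]; simpa using htd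
    · exact e.mapMatrix.trans ((Matrix.compAlgEquiv _ _ _ _).trans
        ((Matrix.reindexAlgEquiv K Δ (Equiv.prodComm _ _)).trans
          (Matrix.compAlgEquiv _ _ _ _).symm))
  · rintro ⟨B, _, _, _, _, hB, m, l, hm, hl, ⟨e⟩⟩
    have : FiniteDimensional K B := Module.finite_of_finrank_pos (by rw [hB]; positivity)
    have hd := e.toLinearEquiv.finrank_eq
    rw [Module.finrank_matrix, Module.finrank_matrix, hdim, hB] at hd
    simp only [Fintype.card_fin] at hd
    have hd' : m * q = l := by
      have : (m * q * n) ^ 2 = (l * n) ^ 2 := by linarith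
      have := Nat.pow_left_injective (n := 2) (by norm_num) this
      exact Nat.eq_of_mul_eq_mul_right hn this
    let act : Matrix (Fin l) (Fin l) B →ₐ[K] Module.End K (Matrix (Fin l) (Fin 1) B) :=
      AlgHom.ofLinearMap
        { toFun := fun M =>
            { toFun := fun x => M * x
              map_add' := fun x y => Matrix.mul_add M x y
              map_smul' := fun k x => by simp }
          map_add' := fun M N => by ext1 x; exact Matrix.add_mul M N x
          map_smul' := fun c M => by ext1 x; exact Matrix.smul_mul c M x }
        (by ext1 x; exact Matrix.one_mul x) (fun M N => by ext1 x; exact Matrix.mul_assoc M N x)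
    obtain ⟨W, ψ, hW⟩ := aux_matrix hm (act.comp e.toAlgHom)
    rw [Module.finrank_matrix, hB] at hW
    simp only [Fintype.card_fin] at hW
    refine ⟨W, inferInstance, inferInstance, inferInstance, ψ, ?_⟩
    refine Nat.eq_of_mul_eq_mul_left hm ?_
    rw [← hW, ← hd']; ring

/-- Embedding criterion.  Let `K/F` be a finite field extension of degree `b`, `D` a
division ring with center `K` of degree `a`, regarded as an `F`-algebra via
`F ⊆ K ⊆ D`, and `E` a division ring with center `F` of degree `N = n·a·b`.  Then `D`
embeds into `E` as an `F`-algebra if and only if the central simple `K`-algebra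
`(E ⊗_F K) ⊗_K Dᵒᵖ` (realized as `(K ⊗[F] E) ⊗[K] Dᵐᵒᵖ`) is Brauer-equivalent over `K`
to some central simple `K`-algebra of degree `n`. -/
theorem embeds_iff_brauer_equivalent_degree_n
    (F K : Type) [Field F] [Field K] [Algebra F K] [FiniteDimensional F K]
    (a b n : ℕ) (hn : 0 < n) (hb : Module.finrank F K = b)
    (D : Type) [DivisionRing D] [Algebra K D] [FiniteDimensional K D]
    (hDcenter : Subalgebra.center K D = ⊥) (ha : Module.finrank K D = a ^ 2)
    [Algebra F D] [IsScalarTower F K D]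
    (E : Type) [DivisionRing E] [Algebra F E] [FiniteDimensional F E]
    (hEcenter : Subalgebra.center F E = ⊥)
    (hE : Module.finrank F E = (n * a * b) ^ 2) :
    (∃ f : D →ₐ[F] E, Function.Injective f) ↔
      ∃ B : BundledAlgebra K, Algebra.IsCentral K B.carrier ∧ IsSimpleRing B.carrier ∧
        Module.finrank K B.carrier = n ^ 2 ∧
        ∃ m l : ℕ, 0 < m ∧ 0 < l ∧
          Nonempty (Matrix (Fin m) (Fin m) ((K ⊗[F] E) ⊗[K] Dᵐᵒᵖ) ≃ₐ[K]
            Matrix (Fin l) (Fin l) B.carrier) := by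
  have hDc : Algebra.IsCentral K D := ⟨hDcenter.le⟩
  have hEc : Algebra.IsCentral F E := ⟨hEcenter.le⟩
  have : Algebra.IsCentral K Dᵐᵒᵖ := inferInstance
  have : Algebra.IsCentral K (K ⊗[F] E) := aux_central_baseChange hEc
  have : IsSimpleRing (K ⊗[F] E) := aux_simple_tensor hEc
  have : Algebra.IsCentral K ((K ⊗[F] E) ⊗[K] Dᵐᵒᵖ) := aux_central_tensor ‹_› ‹_›
  have : IsSimpleRing ((K ⊗[F] E) ⊗[K] Dᵐᵒᵖ) := aux_simple_tensor ‹_›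
  have ha0 : 0 < a := by
    have : 0 < Module.finrank K D := Module.finrank_pos
    rw [ha] at this
    exact Nat.pos_of_ne_zero (by rintro rfl; simp at this)
  have hb0 : 0 < b := hb ▸ Module.finrank_pos
  have hop : Module.finrank K Dᵐᵒᵖ = a ^ 2 := by
    rw [← ha]; exact (MulOpposite.opLinearEquiv K).finrank_eq.symm
  have hdim : Module.finrank K ((K ⊗[F] E) ⊗[K] Dᵐᵒᵖ) = (n * (a ^ 2 * b)) ^ 2 := by
    rw [Module.finrank_tensorProduct, Module.finrank_baseChange, hE, hop]; ring
  have key := aux_main_s5 K ((K ⊗[F] E) ⊗[K] Dᵐᵒᵖ) n (a ^ 2 * b) hn (by positivity) hdim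
  constructor
  · rintro ⟨f, -⟩
    obtain ⟨V, i1, i2, i3, φ, hV⟩ := aux_to_module F K D E f
    obtain ⟨B, j1, j2, h1, h2, h3, h4⟩ := key.1 ⟨V, i1, i2, i3, φ, by
      rw [hb, hE] at hV
      exact Nat.eq_of_mul_eq_mul_left hb0 (by rw [hV]; ring)⟩
    exact ⟨⟨B⟩, h1, h2, h3, h4⟩
  · rintro ⟨B, h1, h2, h3, h4⟩
    obtain ⟨V, i1, i2, i3, φ, hV⟩ := key.2 ⟨B.carrier, _, _, h1, h2, h3, h4⟩
    exact aux_of_module F K D E V φ (by rw [hb, hE, hV]; ring)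
end

section
/- (Theorem: exactness of the index.) Let F be a field, K/F a finite field extension of degree b, D a division ring with center K of degree a (dim_K D = a²), and E a division ring with center F of degree N = nab (dim_F E = N²) for some positive integer n. If the central simple K-algebra (E ⊗_F K) ⊗_K Dᵒᵖ is Brauer-equivalent over K to some central simple K-algebra of degree n, then it is Brauer-equivalent over K to a central division K-algebra of degree exactly n. (That is, if the Schur index of (E ⊗_F K) ⊗_K Dᵒᵖ divides n, then it equals n.) -/
open scoped TensorProduct

/-- A bundled division algebra over a field `K`. -/
structure BundledDivisionAlgebra (K : Type) [Field K] : Type 1 where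
  carrier : Type
  [divisionRing : DivisionRing carrier]
  [algebra : Algebra K carrier]

attribute [instance] BundledDivisionAlgebra.divisionRing
attribute [instance] BundledDivisionAlgebra.algebra

/-- If a division algebra `E` over `F` maps to `M_r(Δ)`, then `dim_F E` divides
`dim_F Δ^r`. -/
lemma col_dvd (F K : Type) [Field F] [Field K] [Algebra F K] [FiniteDimensional F K]
    (E : Type) [DivisionRing E] [Algebra F E] (Δ : Type) [DivisionRing Δ] [Algebra K Δ] [FiniteDimensional K Δ]
    (r : ℕ) (ψ : E →+* Matrix (Fin r) (Fin r) Δ)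
    (hψ : ∀ f : F, ψ (algebraMap F E f) = algebraMap K _ (algebraMap F K f)) :
    Module.finrank F E ∣ Module.finrank F K * (r * Module.finrank K Δ) := by
  let V := Matrix (Fin r) (Fin 1) Δ
  let mF : Module F V := Module.compHom V (algebraMap F K)
  let mE : Module E V :=
    { smul := fun e X => ψ e * X
      one_smul := fun X => by
        change ψ 1 * X = X
        rw [map_one, Matrix.one_mul]
      mul_smul := fun x y X => by
        change ψ (x * y) * X = ψ x * (ψ y * X)
        rw [map_mul, Matrix.mul_assoc]
      smul_zero := fun x => Matrix.mul_zero _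
      smul_add := fun x X Y => Matrix.mul_add _ _ _
      add_smul := fun x y X => by
        change ψ (x + y) * X = ψ x * X + ψ y * X
        rw [map_add, Matrix.add_mul]
      zero_smul := fun X => by
        change ψ 0 * X = 0
        rw [map_zero, Matrix.zero_mul] }
  have : IsScalarTower F K V := ⟨fun f k X => by
    change (f • k) • X = (algebraMap F K f) • (k • X)
    rw [Algebra.smul_def, mul_smul]⟩
  have : IsScalarTower F E V := ⟨fun f e X => by
    change ψ (f • e) * X = (algebraMap F K f) • (ψ e * X)
    rw [Algebra.smul_def, map_mul, hψ, Matrix.mul_assoc]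
    ext i j
    simp [Matrix.algebraMap_eq_diagonal, Matrix.diagonal_mul, Algebra.smul_def]⟩
  have h1 : Module.finrank F K * Module.finrank K V = Module.finrank F V :=
    Module.finrank_mul_finrank F K V
  have h2 : Module.finrank F E * Module.finrank E V = Module.finrank F V :=
    Module.finrank_mul_finrank F E V
  have h3 : Module.finrank K V = r * Module.finrank K Δ := by
    simp [V, Module.finrank_matrix]
  rw [← h3, h1, ← h2]
  exact dvd_mul_right _ _

/-- If `M_k(Δ) ≅ M_l(B)` with `Δ` a division algebra, then `Δ^k` embeds in `B^l`. -/
lemma col_le (K : Type) [Field K] (Δ : Type) [DivisionRing Δ] [Algebra K Δ] [FiniteDimensional K Δ]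
    (B : Type) [Ring B] [Algebra K B] [FiniteDimensional K B] (I : Type) [Fintype I]
    [DecidableEq I] [Nonempty I] (l : ℕ)
    (φ : Matrix I I Δ ≃ₐ[K] Matrix (Fin l) (Fin l) B) :
    Fintype.card I * Module.finrank K Δ ≤ l * Module.finrank K B := by
  obtain ⟨o⟩ := ‹Nonempty I›
  have hne : φ (Matrix.single o o 1) ≠ 0 := by
    rw [Ne, EmbeddingLike.map_eq_zero_iff]
    intro h
    have := congrFun (congrFun h o) o
    simp at this
  obtain ⟨i, j, hij⟩ : ∃ i j, φ (Matrix.single o o 1) i j ≠ 0 := by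
    by_contra! h
    exact hne (by ext i j; simp [h])
  let g : (I → Δ) →ₗ[K] (Fin l → B) :=
    { toFun := fun x i => φ (Matrix.of fun p q => if q = o then x p else 0) i j
      map_add' := fun x y => by
        ext i
        rw [Pi.add_apply, ← Matrix.add_apply, ← map_add]
        refine congrFun (congrFun (congrArg φ ?_) i) j
        ext p q
        by_cases h : q = o <;> simp [h]
      map_smul' := fun c x => by
        ext i
        rw [RingHom.id_apply, Pi.smul_apply, ← Matrix.smul_apply, ← map_smul]
        refine congrFun (congrFun (congrArg φ ?_) i) j
        ext p q
        by_cases h : q = o <;> simp [h] }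
  have hg : Function.Injective g := by
    rw [← LinearMap.ker_eq_bot, LinearMap.ker_eq_bot']
    intro x hx
    by_contra hx0
    obtain ⟨p, hp⟩ := Function.ne_iff.mp hx0
    have key : Matrix.single o o (1 : Δ) = Matrix.single o p (x p)⁻¹ *
        (Matrix.of fun p q => if q = o then x p else 0) := by
      ext s t
      by_cases hs : s = o
      · subst hs
        rw [Matrix.single_mul_apply_same]
        by_cases ht : t = s
        · subst ht
          simp at hp ⊢
          rw [inv_mul_cancel₀ hp]
        · simp [ht, Ne.symm ht]
      · rw [Matrix.single_mul_apply_of_ne _ _ _ _ _ hs]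
        simp [Ne.symm hs]
    apply hij
    rw [key, map_mul, Matrix.mul_apply]
    apply Finset.sum_eq_zero
    intro q _
    have : φ (Matrix.of fun p q => if q = o then x p else 0) q j = 0 := congrFun hx q
    rw [this, mul_zero]
  have := LinearMap.finrank_le_finrank_of_injective hg
  rw [Module.finrank_pi_fintype, Module.finrank_pi_fintype] at this
  simpa using this

/-- Exactness of the index.  With `K/F` finite of degree `b`, `D` a division ring with
center `K` of degree `a`, and `E` a division ring with center `F` of degree `N = n·a·b`:
if the central simple `K`-algebra `(E ⊗_F K) ⊗_K Dᵒᵖ` (realized as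
`(K ⊗[F] E) ⊗[K] Dᵐᵒᵖ`) is Brauer-equivalent over `K` to some central simple
`K`-algebra of degree `n`, then it is Brauer-equivalent over `K` to a central division
`K`-algebra of degree exactly `n`. -/
theorem index_eq_n_of_index_dvd_n
    (F K : Type) [Field F] [Field K] [Algebra F K] [FiniteDimensional F K]
    (a b n : ℕ) (hn : 0 < n) (hb : Module.finrank F K = b)
    (D : Type) [DivisionRing D] [Algebra K D] [FiniteDimensional K D]
    (hDcenter : Subalgebra.center K D = ⊥) (ha : Module.finrank K D = a ^ 2)
    [Algebra F D] [IsScalarTower F K D]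
    (E : Type) [DivisionRing E] [Algebra F E] [FiniteDimensional F E]
    (hEcenter : Subalgebra.center F E = ⊥)
    (hE : Module.finrank F E = (n * a * b) ^ 2)
    (hyp : ∃ B : BundledAlgebra K, Algebra.IsCentral K B.carrier ∧
      IsSimpleRing B.carrier ∧ Module.finrank K B.carrier = n ^ 2 ∧
      ∃ m l : ℕ, 0 < m ∧ 0 < l ∧
        Nonempty (Matrix (Fin m) (Fin m) ((K ⊗[F] E) ⊗[K] Dᵐᵒᵖ) ≃ₐ[K]
          Matrix (Fin l) (Fin l) B.carrier)) :
    ∃ B : BundledDivisionAlgebra K, Subalgebra.center K B.carrier = ⊥ ∧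
      Module.finrank K B.carrier = n ^ 2 ∧
      ∃ m l : ℕ, 0 < m ∧ 0 < l ∧
        Nonempty (Matrix (Fin m) (Fin m) ((K ⊗[F] E) ⊗[K] Dᵐᵒᵖ) ≃ₐ[K]
          Matrix (Fin l) (Fin l) B.carrier) := by
  classical
  obtain ⟨B, hBc, hBs, hBn, m, l, hm, hl, ⟨φ⟩⟩ := hyp
  have : NeZero m := ⟨hm.ne'⟩
  have : NeZero l := ⟨hl.ne'⟩
  have : FiniteDimensional K B.carrier :=
    Module.finite_of_finrank_pos (by rw [hBn]; positivity)
  have hTs : IsSimpleRing ((K ⊗[F] E) ⊗[K] Dᵐᵒᵖ) := by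
    have h : IsSimpleRing (Matrix (Fin m) (Fin m) ((K ⊗[F] E) ⊗[K] Dᵐᵒᵖ)) :=
      IsSimpleRing.of_ringEquiv φ.symm.toRingEquiv inferInstance
    exact ⟨(TwoSidedIdeal.orderIsoMatrix (n := Fin m)).isSimpleOrder_iff.mpr h.simple⟩
  have : Module.Finite K Dᵐᵒᵖ := Module.Finite.equiv (MulOpposite.opLinearEquiv K (M := D))
  have hTdim : Module.finrank K ((K ⊗[F] E) ⊗[K] Dᵐᵒᵖ) = (n * a * b) ^ 2 * a ^ 2 := by
    rw [Module.finrank_tensorProduct, Module.finrank_baseChange, hE,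
      MulOpposite.finrank, ha]
  have : IsArtinianRing ((K ⊗[F] E) ⊗[K] Dᵐᵒᵖ) := IsArtinianRing.of_finite K _
  obtain ⟨r, hr, Δ, _, _, _, ⟨e⟩⟩ :=
    IsSimpleRing.exists_algEquiv_matrix_divisionRing_finite K ((K ⊗[F] E) ⊗[K] Dᵐᵒᵖ)
  have hrdim : r * r * Module.finrank K Δ = (n * a * b) ^ 2 * a ^ 2 := by
    rw [← hTdim, e.toLinearEquiv.finrank_eq, Module.finrank_matrix]
    simp
  let φ' : Matrix (Fin m × Fin r) (Fin m × Fin r) Δ ≃ₐ[K] Matrix (Fin l) (Fin l) B.carrier :=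
    ((Matrix.compAlgEquiv (Fin m) (Fin r) Δ K).symm.trans e.symm.mapMatrix).trans φ
  have hle := col_le K Δ B.carrier (Fin m × Fin r) l φ'
  have hdim2 := φ'.toLinearEquiv.finrank_eq
  rw [Module.finrank_matrix, Module.finrank_matrix] at hdim2
  simp only [Fintype.card_prod, Fintype.card_fin, hBn] at hle hdim2
  let ι : E →+* ((K ⊗[F] E) ⊗[K] Dᵐᵒᵖ) :=
    (Algebra.TensorProduct.includeLeft (R := K) (S := K) (A := K ⊗[F] E) (B := Dᵐᵒᵖ)).toRingHom.comp
      (Algebra.TensorProduct.includeRight (R := F) (A := K) (B := E)).toRingHom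
  have hdvd := col_dvd F K E Δ r (e.toRingEquiv.toRingHom.comp ι) (by
    intro f
    have h1 : ι (algebraMap F E f) = algebraMap K _ (algebraMap F K f) := by
      simp only [ι, RingHom.comp_apply, AlgHom.toRingHom_eq_coe, RingHom.coe_coe, AlgHom.commutes]
      rw [IsScalarTower.algebraMap_apply F K (K ⊗[F] E), AlgHom.commutes]
    rw [RingHom.comp_apply, h1]
    exact e.commutes _)
  rw [hb, hE] at hdvd
  have ha0 : 0 < a := by
    have : 0 < Module.finrank K D := Module.finrank_pos
    rw [ha] at this
    exact Nat.pos_of_ne_zero (by rintro rfl; simp at this)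
  have hb0 : 0 < b := hb ▸ Module.finrank_pos
  have hr0 : 0 < r := Nat.pos_of_ne_zero hr.out
  refine ⟨⟨Δ⟩, ?_, ?_, m, m * r, hm, Nat.mul_pos hm hr0,
    ⟨(e.mapMatrix.trans (Matrix.compAlgEquiv (Fin m) (Fin r) Δ K)).trans
      (Matrix.reindexAlgEquiv K Δ finProdFinEquiv)⟩⟩
  · rw [eq_bot_iff]
    intro c hc
    have hc' : Matrix.scalar (Fin m × Fin r) c ∈
        Subalgebra.center K (Matrix (Fin m × Fin r) (Fin m × Fin r) Δ) := by
      rw [Matrix.subalgebraCenter_eq_scalarAlgHom_map]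
      exact ⟨c, hc, rfl⟩
    have hc2 : φ' (Matrix.scalar (Fin m × Fin r) c) ∈
        Subalgebra.center K (Matrix (Fin l) (Fin l) B.carrier) := by
      rw [Subalgebra.mem_center_iff] at hc' ⊢
      intro y
      obtain ⟨x, rfl⟩ := φ'.surjective y
      rw [← map_mul, ← map_mul, hc' x]
    obtain ⟨k, hk⟩ := Algebra.mem_bot.mp (Algebra.IsCentral.out hc2)
    rw [← φ'.commutes, φ'.injective.eq_iff] at hk
    have := congrFun (congrFun hk (0, 0)) (0, 0)
    rw [Matrix.algebraMap_matrix_apply] at this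
    simp at this
    exact Algebra.mem_bot.mpr ⟨k, this⟩
  · change Module.finrank K Δ = n ^ 2
    generalize Module.finrank K Δ = δ at *
    obtain ⟨c, hc⟩ := hdvd
    have h1 : a ^ 2 * b = c * r := by
      have : (n * a * b) ^ 2 * (a ^ 2 * b) = (n * a * b) ^ 2 * (c * r) := by
        calc _ = b * ((n * a * b) ^ 2 * a ^ 2) := by ring
          _ = (b * (r * δ)) * r := by rw [← hrdim]; ring
          _ = _ := by rw [hc]; ring
      exact Nat.eq_of_mul_eq_mul_left (by positivity) this
    have h2 : δ = n ^ 2 * c ^ 2 := by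
      have : r * r * δ = r * r * (n ^ 2 * c ^ 2) := by
        rw [hrdim]
        calc _ = n ^ 2 * (a ^ 2 * b) ^ 2 := by ring
          _ = _ := by rw [h1]; ring
      exact Nat.eq_of_mul_eq_mul_left (by positivity) this
    have hc0 : 0 < c := Nat.pos_of_ne_zero (by
      rintro rfl
      have : 0 < a ^ 2 * b := by positivity
      omega)
    have hge : n ^ 2 ≤ δ := by rw [h2]; exact Nat.le_mul_of_pos_right _ (by positivity)
    refine le_antisymm ?_ hge
    have h3 : (l ^ 2 * n ^ 2) * δ ≤ (l ^ 2 * n ^ 2) * n ^ 2 := by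
      calc _ = (m * r * δ) ^ 2 := by
              have : l ^ 2 * n ^ 2 = m * r * (m * r) * δ := by rw [hdim2]; ring
              rw [this]; ring
        _ ≤ (l * n ^ 2) ^ 2 := Nat.pow_le_pow_left hle 2
        _ = _ := by ring
    exact Nat.le_of_mul_le_mul_left h3 (by positivity)
end
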